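/- arXiv:2504.07355 — 2 statements merged into one kernel-verified Lean document; each statement's English description precedes it below -/
import Mathlib

section
/- Let (n_k)_{k≥1} be a sequence of positive integers with sup_k n_k = ∞, and let M = ℓ∞-⊕_{k=1}^∞ B(ℂ^{n_k}) be the ℓ∞-direct sum of the matrix algebras B(ℂ^{n_k}) (bounded sequences (a_k) with a_k ∈ B(ℂ^{n_k}), with the supremum norm and coordinatewise product). Then there exist ε > 0 and finitely many unitary elements u₁,…,u_n ∈ M such that no element T = Σᵢ aᵢ ⊗ bᵢ of the algebraic tensor product M ⊗ M with Σᵢ aᵢ bᵢ = 1 (the identity of M) satisfies ‖uⱼ·T − T·uⱼ‖_π < ε for all j = 1,…,n. Here u·T and T·u denote the bimodule actions u·(a ⊗ b) = (u a) ⊗ b and (a ⊗ b)·u = a ⊗ (b u), and ‖·‖_π is the projective tensor seminorm on M ⊗ M. -/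
open scoped TensorProduct ENNReal

set_option maxHeartbeats 1000000
set_option synthInstance.maxHeartbeats 1000000

noncomputable section

/-- The projective tensor seminorm of an element `u` of the algebraic tensor product
`X ⊗ Y` of two normed spaces: the infimum of `Σⱼ ‖xⱼ‖·‖yⱼ‖` over all representations
`u = Σⱼ xⱼ ⊗ yⱼ`. -/
def projSeminorm {X Y : Type*} [NormedAddCommGroup X] [NormedSpace ℂ X]
    [NormedAddCommGroup Y] [NormedSpace ℂ Y] (u : X ⊗[ℂ] Y) : ℝ :=
  sInf {s : ℝ | ∃ (n : ℕ) (x : Fin n → X) (y : Fin n → Y),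
    u = ∑ j, x j ⊗ₜ[ℂ] y j ∧ s = ∑ j, ‖x j‖ * ‖y j‖}

/-- The left bimodule action on the algebraic tensor product `A ⊗ A`:
`a · (x ⊗ y) = (a x) ⊗ y`. -/
def actL {A : Type*} [NormedRing A] [NormedAlgebra ℂ A] (a : A) :
    A ⊗[ℂ] A →ₗ[ℂ] A ⊗[ℂ] A :=
  TensorProduct.map (LinearMap.mulLeft ℂ a) LinearMap.id

/-- The right bimodule action on the algebraic tensor product `A ⊗ A`:
`(x ⊗ y) · a = x ⊗ (y a)`. -/
def actR {A : Type*} [NormedRing A] [NormedAlgebra ℂ A] (a : A) :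
    A ⊗[ℂ] A →ₗ[ℂ] A ⊗[ℂ] A :=
  TensorProduct.map LinearMap.id (LinearMap.mulRight ℂ a)

/-- The `ℓ∞`-direct sum `M = ⊕_k B(ℂ^{n_k})` of the matrix algebras `B(ℂ^{n_k})`:
bounded sequences `(a_k)` with `a_k ∈ B(ℂ^{n_k})`, with the supremum norm and
coordinatewise product. -/
abbrev lpInftySum (n : ℕ → ℕ) :=
  lp (fun k => EuclideanSpace ℂ (Fin (n k)) →L[ℂ] EuclideanSpace ℂ (Fin (n k))) ∞


namespace QE
open Matrix
open scoped Matrix.Norms.L2Operator ComplexOrder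
set_option linter.unusedSectionVars false

variable {ι κ : Type*} [Fintype ι] [DecidableEq ι] [Fintype κ] [DecidableEq κ]

/-- squared Frobenius norm -/
def frob (A : Matrix ι κ ℂ) : ℝ := ∑ i, ∑ j, ‖A i j‖ ^ 2

lemma frob_nonneg (A : Matrix ι κ ℂ) : 0 ≤ frob A := by
  unfold frob; positivity

lemma frob_conjTranspose (A : Matrix ι κ ℂ) : frob Aᴴ = frob A := by
  unfold frob
  rw [Finset.sum_comm]
  simp

lemma trace_conj_mul (A : Matrix ι κ ℂ) : trace (Aᴴ * A) = (frob A : ℂ) := by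
  simp only [frob, trace, diag, mul_apply, conjTranspose_apply]
  rw [Finset.sum_comm]
  push_cast
  refine Finset.sum_congr rfl fun i _ => Finset.sum_congr rfl fun j _ => ?_
  rw [mul_comm]
  exact Complex.mul_conj' _

lemma trace_cs (A B : Matrix ι κ ℂ) : ‖trace (Aᴴ * B)‖ ≤ √(frob A) * √(frob B) := by
  simp only [frob, trace, diag, mul_apply, conjTranspose_apply]
  rw [Finset.sum_comm, ← Finset.sum_product', ← Finset.sum_product', ← Finset.sum_product']
  refine (norm_sum_le _ _).trans ?_
  simp only [norm_mul, norm_star]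
  exact Real.sum_mul_le_sqrt_mul_sqrt _ _ _

lemma frob_mul_le {μ : Type*} [Fintype μ] [DecidableEq μ] (W : Matrix μ ι ℂ) (A : Matrix ι κ ℂ) :
    frob (W * A) ≤ ‖W‖ ^ 2 * frob A := by
  unfold frob
  rw [Finset.sum_comm, Finset.sum_comm (f := fun i j => ‖A i j‖ ^ 2), Finset.mul_sum]
  refine Finset.sum_le_sum fun j _ => ?_
  have := Matrix.l2_opNorm_mulVec W (WithLp.toLp 2 (fun i => A i j))
  have h2 := pow_le_pow_left₀ (norm_nonneg _) this 2
  rw [mul_pow, EuclideanSpace.norm_sq_eq, EuclideanSpace.norm_sq_eq] at h2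
  exact h2

lemma frob_mul_le' {μ : Type*} [Fintype μ] [DecidableEq μ] (A : Matrix μ ι ℂ) (W : Matrix ι κ ℂ) :
    frob (A * W) ≤ ‖W‖ ^ 2 * frob A := by
  rw [← frob_conjTranspose, conjTranspose_mul, ← frob_conjTranspose A, ← l2_opNorm_conjTranspose W]
  exact frob_mul_le _ _

/-- `c` bounds the trace norm of `X`. -/
def TB (X : Matrix ι ι ℂ) (c : ℝ) : Prop := ∀ W : Matrix ι ι ℂ, ‖W‖ ≤ 1 → ‖trace (W * X)‖ ≤ c

lemma norm_le_one_of_unitary {U : Matrix ι ι ℂ} (h : Uᴴ * U = 1) : ‖U‖ ≤ 1 := by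
  have h1 := Matrix.l2_opNorm_conjTranspose_mul_self U
  rw [h] at h1
  have h2 : ‖(1 : Matrix ι ι ℂ)‖ ≤ 1 := by
    rw [← Matrix.diagonal_one, Matrix.l2_opNorm_diagonal]
    refine (pi_norm_le_iff_of_nonneg zero_le_one).2 fun i => ?_
    simp
  nlinarith [norm_nonneg U]

lemma norm_conj_diag {U : Matrix ι ι ℂ} (h : Uᴴ * U = 1) (v : ι → ℂ) (hv : ∀ i, ‖v i‖ ≤ 1) :
    ‖U * diagonal v * Uᴴ‖ ≤ 1 := by
  have h1 := norm_le_one_of_unitary h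
  have h2 : ‖Uᴴ‖ ≤ 1 := by rw [l2_opNorm_conjTranspose]; exact h1
  have h3 : ‖(diagonal v : Matrix ι ι ℂ)‖ ≤ 1 := by
    rw [Matrix.l2_opNorm_diagonal]
    exact (pi_norm_le_iff_of_nonneg zero_le_one).2 hv
  have h4 : ‖U * diagonal v‖ ≤ 1 :=
    (l2_opNorm_mul _ _).trans (mul_le_one₀ h1 (norm_nonneg _) h3)
  exact (l2_opNorm_mul _ _).trans (mul_le_one₀ h4 (norm_nonneg _) h2)

lemma herm_diag {A : Matrix ι ι ℂ} (hA : A.IsHermitian) :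
    ∃ U : Matrix ι ι ℂ, Uᴴ * U = 1 ∧ U * Uᴴ = 1 ∧
      A = U * diagonal (fun i => (hA.eigenvalues i : ℂ)) * Uᴴ := by
  refine ⟨hA.eigenvectorUnitary, ?_, ?_, ?_⟩
  · exact Unitary.star_mul_self_of_mem hA.eigenvectorUnitary.2
  · exact Unitary.mul_star_self_of_mem hA.eigenvectorUnitary.2
  · exact hA.spectral_theorem

lemma trace_conj_diag {U : Matrix ι ι ℂ} (h : Uᴴ * U = 1) (v : ι → ℂ) :
    trace (U * diagonal v * Uᴴ) = ∑ i, v i := by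
  rw [trace_mul_comm, ← mul_assoc, h, one_mul, trace_diagonal]

lemma conj_diag_mul {U : Matrix ι ι ℂ} (h : Uᴴ * U = 1) (v w : ι → ℂ) :
    (U * diagonal v * Uᴴ) * (U * diagonal w * Uᴴ) = U * diagonal (fun i => v i * w i) * Uᴴ := by
  calc _ = U * diagonal v * (Uᴴ * U) * diagonal w * Uᴴ := by simp only [mul_assoc]
    _ = _ := by rw [h, mul_one, mul_assoc U, diagonal_mul_diagonal]

lemma conj_diag_herm (U : Matrix ι ι ℂ) (v : ι → ℝ) :
    (U * diagonal (fun i => (v i : ℂ)) * Uᴴ)ᴴ = U * diagonal (fun i => (v i : ℂ)) * Uᴴ := by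
  rw [conjTranspose_mul, conjTranspose_mul, conjTranspose_conjTranspose, diagonal_conjTranspose,
    mul_assoc]
  congr 3
  ext i; simp

lemma conj_diag_psd (U : Matrix ι ι ℂ) (v : ι → ℝ) (hv : ∀ i, 0 ≤ v i) :
    (U * diagonal (fun i => (v i : ℂ)) * Uᴴ).PosSemidef := by
  apply Matrix.PosSemidef.mul_mul_conjTranspose_same
  apply Matrix.PosSemidef.diagonal
  intro i
  simpa using hv i

lemma trace_conj_diag_mul_psd (U : Matrix ι ι ℂ) (v : ι → ℝ) (hv : ∀ i, 0 ≤ v i)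
    {B : Matrix ι ι ℂ} (hB : B.PosSemidef) :
    0 ≤ (trace (U * diagonal (fun i => (v i : ℂ)) * Uᴴ * B)).re := by
  have h1 : trace (U * diagonal (fun i => (v i : ℂ)) * Uᴴ * B) =
      trace (diagonal (fun i => (v i : ℂ)) * (Uᴴ * B * U)) := by
    rw [mul_assoc, mul_assoc, trace_mul_comm, mul_assoc, mul_assoc]
  rw [h1]
  have hP : (Uᴴ * B * U).PosSemidef := hB.conjTranspose_mul_mul_same U
  simp only [trace, diag, diagonal_mul, Complex.re_sum]
  refine Finset.sum_nonneg fun i _ => ?_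
  have : 0 ≤ (Uᴴ * B * U) i i := hP.diag_nonneg
  rw [Complex.re_ofReal_mul]
  exact mul_nonneg (hv i) (Complex.le_def.1 this).1

/-- Powers–Størmer -/
lemma powers_stormer {h k : Matrix ι ι ℂ} (hh : h.PosSemidef) (hk : k.PosSemidef) :
    ∃ W : Matrix ι ι ℂ, ‖W‖ ≤ 1 ∧ frob (h - k) ≤ (trace (W * (h * h - k * k))).re := by
  have hD : (h - k).IsHermitian := hh.1.sub hk.1
  obtain ⟨U, hU, hU', hA⟩ := herm_diag hD
  set l := hD.eigenvalues
  set sg : ι → ℂ := fun i => ((SignType.sign (l i) : ℝ) : ℂ) with hsg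
  set W := U * diagonal sg * Uᴴ with hW
  refine ⟨W, norm_conj_diag hU _ fun i => ?_, ?_⟩
  · rw [hsg]; simp only [Complex.norm_real]
    rcases lt_trichotomy (l i) 0 with h0 | h0 | h0 <;> simp [h0]
  set D := h - k with hDdef
  have hcomm : W * D = D * W := by
    rw [hA, hW, conj_diag_mul hU, conj_diag_mul hU]; simp only [mul_comm]
  have habs : W * D = U * diagonal (fun i => ((|l i| : ℝ) : ℂ)) * Uᴴ := by
    rw [hA, hW, conj_diag_mul hU]
    congr 3; ext i
    rw [hsg, ← Complex.ofReal_mul, sign_mul_self]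
  have e1 : trace (W * (h * h - k * k)) = trace (W * D * (h + k)) := by
    have : (2:ℂ) • (h * h - k * k) = D * (h + k) + (h + k) * D := by
      rw [hDdef, two_smul]; noncomm_ring
    have h2 : (2:ℂ) * trace (W * (h * h - k * k)) = 2 * trace (W * D * (h + k)) := by
      rw [← smul_eq_mul, ← trace_smul, ← mul_smul_comm, this, mul_add, trace_add, two_mul,
        ← mul_assoc W D]
      congr 1
      rw [← mul_assoc, trace_mul_comm, ← mul_assoc, hcomm]
    exact mul_left_cancel₀ two_ne_zero h2
  have e2 : (frob D : ℂ) = trace (D * (h - k)) := by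
    rw [← trace_conj_mul, hD.eq]
  have hp : U * diagonal (fun i => ((|l i| + l i : ℝ) : ℂ)) * Uᴴ = W * D + D := by
    rw [habs]; conv_rhs => rw [hA]
    rw [← add_mul, ← mul_add, diagonal_add]; simp
  have hm : U * diagonal (fun i => ((|l i| - l i : ℝ) : ℂ)) * Uᴴ = W * D - D := by
    rw [habs]; conv_rhs => rw [hA]
    rw [← sub_mul, ← mul_sub, diagonal_sub]; simp
  have p1 := trace_conj_diag_mul_psd U (fun i => |l i| + l i)
    (fun i => by linarith [neg_abs_le (l i)]) hk
  have p2 := trace_conj_diag_mul_psd U (fun i => |l i| - l i)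
    (fun i => by linarith [le_abs_self (l i)]) hh
  rw [hp] at p1
  rw [hm] at p2
  have e3 : frob D = (trace (D * (h - k))).re := by rw [← e2]; simp
  rw [e3, e1]
  simp only [add_mul, sub_mul, mul_add, mul_sub, trace_add, trace_sub, Complex.add_re,
    Complex.sub_re] at p1 p2 ⊢
  linarith

lemma exists_sqrt (Φ : Matrix ι ι ℂ) : ∃ V h : Matrix ι ι ℂ, ‖V‖ ≤ 1 ∧ h.PosSemidef ∧
    Vᴴ * Φ = h * h ∧ V * (h * h) = Φ ∧ ‖trace h‖ ^ 2 ≤ Φ.rank * frob h := by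
  have hP : (Φᴴ * Φ).PosSemidef := posSemidef_conjTranspose_mul_self Φ
  obtain ⟨U, hU, hU', hA⟩ := herm_diag hP.1
  have hrank := hP.1.rank_eq_card_non_zero_eigs
  rw [rank_conjTranspose_mul_self] at hrank
  set μ := hP.1.eigenvalues
  have hμ : ∀ i, 0 ≤ μ i := hP.eigenvalues_nonneg
  set s : ι → ℝ := fun i => √(μ i) with hs
  have hs0 : ∀ i, 0 ≤ s i := fun i => Real.sqrt_nonneg _
  have hss : ∀ i, s i * s i = μ i := fun i => Real.mul_self_sqrt (hμ i)
  set S := U * diagonal (fun i => (((s i)⁻¹ : ℝ) : ℂ)) * Uᴴ with hS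
  set Q := U * diagonal (fun i => ((s i : ℝ) : ℂ)) * Uᴴ with hQ
  set h := U * diagonal (fun i => ((√(s i) : ℝ) : ℂ)) * Uᴴ with hh
  have hhh : h * h = Q := by
    rw [hh, hQ, conj_diag_mul hU]
    congr 3; ext i
    rw [← Complex.ofReal_mul, Real.mul_self_sqrt (hs0 i)]
  have hSh : Sᴴ = S := conj_diag_herm _ _
  refine ⟨Φ * S, h, ?_, conj_diag_psd _ _ fun i => Real.sqrt_nonneg _, ?_, ?_, ?_⟩
  · have h1 := Matrix.l2_opNorm_conjTranspose_mul_self (Φ * S)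
    have h2 : (Φ * S)ᴴ * (Φ * S) = U * diagonal (fun i => (((s i)⁻¹ * (μ i * (s i)⁻¹) : ℝ) : ℂ)) * Uᴴ := by
      rw [conjTranspose_mul, hSh, mul_assoc, ← mul_assoc Φᴴ, hA, hS, conj_diag_mul hU,
        conj_diag_mul hU]
      simp
    have h3 : ‖(Φ * S)ᴴ * (Φ * S)‖ ≤ 1 := by
      rw [h2]
      refine norm_conj_diag hU _ fun i => ?_
      rw [Complex.norm_real, ← hss]
      by_cases h0 : s i = 0
      · simp [h0]
      · field_simp; simp
    rw [h1] at h3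
    nlinarith [norm_nonneg (Φ * S)]
  · rw [hhh, conjTranspose_mul, hSh, mul_assoc, hA, hS, conj_diag_mul hU, hQ]
    congr 3; ext i
    rw [← Complex.ofReal_mul, ← hss]
    by_cases h0 : s i = 0
    · simp [h0]
    · congr 1; field_simp
  · rw [hhh]
    set E := 1 - S * Q with hE
    have hEd : E = U * diagonal (fun i => ((1 - (s i)⁻¹ * s i : ℝ) : ℂ)) * Uᴴ := by
      have : (1 : Matrix ι ι ℂ) = U * diagonal (fun i => (1 : ℂ)) * Uᴴ := by
        simp [hU']
      rw [hE, hS, hQ, conj_diag_mul hU, this, ← sub_mul, ← mul_sub, diagonal_sub]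
      simp
    have h0 : (Φ * E)ᴴ * (Φ * E) = 0 := by
      rw [conjTranspose_mul, mul_assoc, ← mul_assoc Φᴴ, hA, hEd, conj_diag_herm, conj_diag_mul hU,
        conj_diag_mul hU]
      have : (fun i => ((1 - (s i)⁻¹ * s i : ℝ) : ℂ) * ((μ i : ℂ) * ((1 - (s i)⁻¹ * s i : ℝ) : ℂ)))
          = fun i => (0 : ℂ) := by
        ext i
        rw [← Complex.ofReal_mul, ← Complex.ofReal_mul, ← hss]
        by_cases h0 : s i = 0
        · simp [h0]
        · simp [h0]
      rw [this]; simp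
    have h1 : Φ * E = 0 := by
      exact Matrix.conjTranspose_mul_self_eq_zero.1 h0
    rw [hE, mul_sub, mul_one, sub_eq_zero, ← mul_assoc] at h1
    exact h1.symm
  · have hf : frob h = ∑ i, s i := by
      have := trace_conj_mul h
      rw [show hᴴ = h from conj_diag_herm _ _, hhh, hQ, trace_conj_diag hU] at this
      exact_mod_cast this.symm
    have ht : ‖trace h‖ = ∑ i, √(s i) := by
      rw [hh, trace_conj_diag hU, ← Complex.ofReal_sum, Complex.norm_real, Real.norm_of_nonneg]
      exact Finset.sum_nonneg fun i _ => Real.sqrt_nonneg _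
    rw [hf, ht, hrank]
    have h1 : ∑ i, √(s i) = ∑ i, (if μ i ≠ 0 then 1 else 0) * √(s i) := by
      refine Finset.sum_congr rfl fun i _ => ?_
      by_cases h0 : μ i = 0
      · simp [hs, h0]
      · simp [h0]
    rw [h1]
    refine (Finset.sum_mul_sq_le_sq_mul_sq _ _ _).trans (le_of_eq ?_)
    congr 1
    · rw [Fintype.card_subtype, Finset.card_filter]
      push_cast
      refine Finset.sum_congr rfl fun i _ => ?_
      split_ifs <;> simp
    · exact Finset.sum_congr rfl fun i _ => Real.sq_sqrt (hs0 i)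

lemma frob_unitary_mul {U : Matrix ι ι ℂ} (hU : Uᴴ * U = 1) (A : Matrix ι κ ℂ) :
    frob (U * A) = frob A := by
  have := trace_conj_mul (U * A)
  rw [conjTranspose_mul, Matrix.mul_assoc, ← Matrix.mul_assoc Uᴴ, hU, Matrix.one_mul,
    trace_conj_mul] at this
  exact_mod_cast this.symm

lemma frob_mul_unitary {U : Matrix ι ι ℂ} (hU : U * Uᴴ = 1) (A : Matrix κ ι ℂ) :
    frob (A * U) = frob A := by
  rw [← frob_conjTranspose, conjTranspose_mul, frob_unitary_mul (by simpa using hU),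
    frob_conjTranspose]

/-- key operator lemma -/
lemma exists_h (Φ : Matrix ι ι ℂ) : ∃ h : Matrix ι ι ℂ, ‖trace h‖ ^ 2 ≤ Φ.rank * frob h ∧
    (trace Φ).re ≤ frob h ∧
    ∀ (U : Matrix ι ι ℂ) (c : ℝ), Uᴴ * U = 1 → U * Uᴴ = 1 → TB (U * Φ - Φ * U) c →
      frob (U * h * Uᴴ - h) ≤ c + √(2 * c) * √(frob h) := by
  obtain ⟨V, h, hV, hh, hVQ, hQ, htr⟩ := exists_sqrt Φ
  have hfr : (frob h : ℂ) = trace (h * h) := by rw [← trace_conj_mul, hh.1.eq]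
  have hVh : ‖Vᴴ‖ ≤ 1 := by rw [l2_opNorm_conjTranspose]; exact hV
  refine ⟨h, htr, ?_, fun U c hU hU' hc => ?_⟩
  · rw [← hQ, ← mul_assoc, trace_mul_comm]
    refine (Complex.re_le_norm _).trans ?_
    nth_rewrite 1 [← hh.1.eq]
    refine (trace_cs _ _).trans ?_
    rw [← Real.sqrt_mul (frob_nonneg _)]
    apply Real.sqrt_le_iff.2 ⟨frob_nonneg _, ?_⟩
    have := frob_mul_le V h
    have h2 : ‖V‖ ^ 2 ≤ 1 := pow_le_one₀ (norm_nonneg _) hV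
    nlinarith [frob_nonneg h]
  set h' := U * h * Uᴴ with hh'
  have hh'p : h'.PosSemidef := hh.mul_mul_conjTranspose_same U
  set V' := U * V * Uᴴ with hV'
  set Φ' := U * Φ * Uᴴ with hΦ'
  have hUn := norm_le_one_of_unitary hU
  have hUn' : ‖Uᴴ‖ ≤ 1 := by rw [l2_opNorm_conjTranspose]; exact hUn
  have hV'n : ‖V'‖ ≤ 1 :=
    (l2_opNorm_mul _ _).trans (mul_le_one₀ ((l2_opNorm_mul _ _).trans
      (mul_le_one₀ hUn (norm_nonneg _) hV)) (norm_nonneg _) hUn')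
  have hh'2 : h' * h' = U * (h * h) * Uᴴ := by
    calc h' * h' = U * h * (Uᴴ * U) * h * Uᴴ := by simp only [hh', mul_assoc]
      _ = _ := by rw [hU]; simp only [mul_one, mul_assoc]
  have hVQ' : V' * (h' * h') = Φ' := by
    rw [hh'2]
    calc _ = U * V * (Uᴴ * U) * (h * h) * Uᴴ := by simp only [hV', mul_assoc]
      _ = _ := by rw [hU, mul_one, mul_assoc U V, hQ]
  have hfr' : frob h' = frob h := by
    rw [hh', frob_mul_unitary (by simpa using hU), frob_unitary_mul hU]
  -- trace bound for the conjugated difference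
  have hTB : ∀ W : Matrix ι ι ℂ, ‖W‖ ≤ 1 → ‖trace (W * (Φ' - Φ))‖ ≤ c := by
    intro W hW
    have e : Φ' - Φ = (U * Φ - Φ * U) * Uᴴ := by
      rw [sub_mul, mul_assoc Φ U, hU', mul_one]
    rw [e, ← mul_assoc, trace_mul_comm, ← mul_assoc]
    exact hc _ ((l2_opNorm_mul _ _).trans (mul_le_one₀ hUn' (norm_nonneg _) hW))
  obtain ⟨W, hW, hWle⟩ := powers_stormer hh'p hh
  refine hWle.trans ?_
  have hc0 : 0 ≤ c := (norm_nonneg _).trans (hTB 0 (by simp))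
  have e : h' * h' - h * h = Vᴴ * (Φ' - Φ) + (1 - Vᴴ * V') * h' * h' := by
    rw [mul_sub, hVQ, ← hVQ', sub_mul, sub_mul, one_mul]
    simp only [mul_assoc]; abel
  rw [e, mul_add, trace_add, Complex.add_re]
  refine add_le_add ?_ ?_
  · refine (Complex.re_le_norm _).trans ?_
    rw [← mul_assoc]
    exact hTB _ ((l2_opNorm_mul _ _).trans (mul_le_one₀ hW (norm_nonneg _) hVh))
  · refine (Complex.re_le_norm _).trans ?_
    rw [← mul_assoc, trace_mul_comm]
    nth_rewrite 1 [← hh'p.1.eq]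
    refine (trace_cs _ _).trans ?_
    rw [hfr', mul_comm]
    refine mul_le_mul_of_nonneg_right (Real.sqrt_le_sqrt ?_) (Real.sqrt_nonneg _)
    refine (frob_mul_le _ _).trans ?_
    have hW2 : ‖W‖ ^ 2 ≤ 1 := pow_le_one₀ (norm_nonneg _) hW
    have hX : frob ((1 - Vᴴ * V') * h') ≤ 2 * c := by
      set X := Vᴴ * V' with hXdef
      have hXn : ‖X‖ ≤ 1 := (l2_opNorm_mul _ _).trans (mul_le_one₀ hVh (norm_nonneg _) hV'n)
      have hXf : frob (X * h') ≤ frob h := by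
        have := frob_mul_le X h'
        have h2 : ‖X‖ ^ 2 ≤ 1 := pow_le_one₀ (norm_nonneg _) hXn
        rw [hfr'] at this
        nlinarith [frob_nonneg h]
      have hcross : trace (h'ᴴ * (X * h')) = trace (Vᴴ * Φ') := by
        rw [← hVQ', trace_mul_comm, hh'p.1.eq, hXdef]; simp only [mul_assoc]
      have hcross2 : trace ((X * h')ᴴ * h') = star (trace (Vᴴ * Φ')) := by
        rw [← hcross, ← trace_conjTranspose, conjTranspose_mul h'ᴴ, conjTranspose_conjTranspose]
      have hexp : (frob ((1 - X) * h') : ℂ) = frob h' + frob (X * h') - trace (Vᴴ * Φ')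
          - star (trace (Vᴴ * Φ')) := by
        rw [← hcross2, ← hcross, ← trace_conj_mul, ← trace_conj_mul, ← trace_conj_mul, sub_mul, one_mul,
          conjTranspose_sub, sub_mul, mul_sub, mul_sub, trace_sub, trace_sub, trace_sub]
        ring
      have hre := congrArg Complex.re hexp
      simp only [Complex.sub_re, Complex.add_re, Complex.ofReal_re, Complex.star_def,
        Complex.conj_re] at hre
      have h1 := hTB Vᴴ hVh
      rw [mul_sub, hVQ, trace_sub, ← hfr] at h1
      have h2 := (Complex.abs_re_le_norm _).trans h1
      simp only [Complex.sub_re, Complex.ofReal_re] at h2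
      have := (abs_le.1 h2).1
      linarith
    nlinarith [frob_nonneg ((1 - Vᴴ * V') * h')]

end QE

namespace QE

section pingpong
variable {q : ℕ}

local notation "Zm" => ZMod (2 * q + 1)

lemma vma_neg (k : Zm) : (-k).valMinAbs = -k.valMinAbs := by
  apply ZMod.valMinAbs_neg_of_ne_half
  omega

/-- near zero -/
def near (k : Zm) : Prop := 4 * |k.valMinAbs| < 2 * q + 1

lemma vma_add {k l : Zm} (hk : near k) (hl : near l) :
    (k + l).valMinAbs = k.valMinAbs + l.valMinAbs := by
  unfold near at hk hl
  rw [ZMod.valMinAbs_spec]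
  refine ⟨by push_cast [ZMod.coe_valMinAbs]; rfl, ?_⟩
  rcases abs_cases k.valMinAbs with h | h <;> rcases abs_cases l.valMinAbs with h' | h' <;>
    constructor <;> push_cast <;> omega

/-- first cone -/
def Q1 (p : Zm × Zm) : Prop := p.1.valMinAbs ≠ 0 ∧ 0 ≤ p.1.valMinAbs * p.2.valMinAbs

/-- second cone -/
def Q2 (p : Zm × Zm) : Prop := p.2.valMinAbs ≠ 0 ∧ p.1.valMinAbs * p.2.valMinAbs ≤ 0

open Classical in
/-- mass of a set -/
def mass (w : Zm × Zm → ℝ) (P : Zm × Zm → Prop) : ℝ := ∑ p, if P p then w p else 0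

lemma mass_mono (w : Zm × Zm → ℝ) (hw : ∀ p, 0 ≤ w p) {P P' : Zm × Zm → Prop}
    (h : ∀ p, P p → P' p) : mass w P ≤ mass w P' := by
  classical
  refine Finset.sum_le_sum fun p _ => ?_
  have := hw p
  have := h p
  split_ifs <;> simp_all

lemma mass_or (w : Zm × Zm → ℝ) (hw : ∀ p, 0 ≤ w p) (P P' : Zm × Zm → Prop) :
    mass w (fun p => P p ∨ P' p) ≤ mass w P + mass w P' := by
  classical
  unfold mass
  rw [← Finset.sum_add_distrib]
  refine Finset.sum_le_sum fun p _ => ?_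
  have := hw p
  split_ifs <;> simp_all

lemma mass_disj (w : Zm × Zm → ℝ) (hw : ∀ p, 0 ≤ w p) {P P' R : Zm × Zm → Prop}
    (h1 : ∀ p, P p → R p) (h2 : ∀ p, P' p → R p) (h3 : ∀ p, P p → ¬ P' p) :
    mass w P + mass w P' ≤ mass w R := by
  classical
  unfold mass
  rw [← Finset.sum_add_distrib]
  refine Finset.sum_le_sum fun p _ => ?_
  have := hw p
  have := h1 p
  have := h2 p
  have := h3 p
  split_ifs <;> simp_all

lemma mass_comp (w : Zm × Zm → ℝ) (σ : Equiv.Perm (Zm × Zm)) (P : Zm × Zm → Prop) :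
    mass (fun p => w (σ p)) (fun p => P (σ p)) = mass w P := by
  classical
  exact Equiv.sum_comp σ (fun p => if P p then w p else 0)

/-- rotation -/
def rot : Equiv.Perm (Zm × Zm) where
  toFun p := (p.2, -p.1)
  invFun p := (-p.2, p.1)
  left_inv p := by simp
  right_inv p := by simp

/-- shear -/
def shr : Equiv.Perm (Zm × Zm) where
  toFun p := (p.1, p.2 - p.1)
  invFun p := (p.1, p.2 + p.1)
  left_inv p := by simp
  right_inv p := by simp

lemma pingpong (w : Zm × Zm → ℝ) (hw : ∀ p, 0 ≤ w p) (δ : ℝ)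
    (hR : ∀ P, |mass (fun p => w (rot p)) P - mass w P| ≤ δ)
    (hS : ∀ P, |mass (fun p => w (shr p)) P - mass w P| ≤ δ)
    (hfar : mass w (fun p => ¬ near p.1) ≤ δ) :
    ∑ p, w p ≤ w 0 + 21 * δ := by
  classical
  -- invariance of sets
  have hR' : ∀ P : Zm × Zm → Prop, |mass w P - mass w (fun p => P (rot p))| ≤ δ := by
    intro P
    rw [← mass_comp w rot P]
    exact hR _
  have hS' : ∀ P : Zm × Zm → Prop, |mass w P - mass w (fun p => P (shr p))| ≤ δ := by
    intro P
    rw [← mass_comp w shr P]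
    exact hS _
  have hfar2 : mass w (fun p => ¬ near p.2) ≤ 2 * δ := by
    have := (abs_le.1 (hR' (fun p => ¬ near p.1))).1
    have e : (fun p : Zm × Zm => ¬ near (rot p).1) = fun p => ¬ near p.2 := rfl
    rw [e] at this
    linarith
  set A : Zm × Zm → Prop := fun p => Q1 p ∧ near p.1 ∧ near p.2 with hA
  have hQA : mass w Q1 ≤ mass w A + 3 * δ := by
    have h1 : mass w Q1 ≤ mass w (fun p => A p ∨ (¬ near p.1 ∨ ¬ near p.2)) := by
      apply mass_mono w hw
      intro p hp
      simp only [hA]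
      tauto
    have h2 := mass_or w hw A (fun p => ¬ near p.1 ∨ ¬ near p.2)
    have h3 := mass_or w hw (fun p => ¬ near p.1) (fun p => ¬ near p.2)
    linarith
  -- B1 = image of A under (k,l) ↦ (k,l+k);  B2 = image under (k,l) ↦ (k+l,l)
  set B1 : Zm × Zm → Prop := fun p => A (shr p) with hB1
  have hB1m : mass w A ≤ mass w B1 + δ := by
    have := (abs_le.1 (hS' A)).2
    linarith
  set B2 : Zm × Zm → Prop := fun p => A (p.1 - p.2, p.2) with hB2
  have hB2m : mass w A ≤ mass w B2 + 3 * δ := by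
    -- A -> A ∘ rot
    have h1 := (abs_le.1 (hR' A)).2
    have h2 := (abs_le.1 (hS' (fun p => A (rot (shr.symm p))))).1
    have h3 := (abs_le.1 (hR' (fun p => A (rot (shr.symm (rot.symm p)))))).1
    have e1 : (fun p : Zm × Zm => A (rot (shr.symm (rot.symm (rot p))))) =
      fun p => A (rot (shr.symm p)) := by simp
    have e2 : (fun p : Zm × Zm => A (rot (shr.symm (shr p)))) =
      fun p => A (rot p) := by simp
    have e3 : (fun p : Zm × Zm => A (rot (shr.symm (rot.symm p)))) = B2 := by
      funext p
      simp only [hB2]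
      congr 1
      simp [rot, shr, sub_eq_add_neg]
    rw [e1, e3] at h3
    rw [e2] at h2
    linarith
  have hdis : mass w B1 + mass w B2 ≤ mass w Q1 := by
    have hb1 : ∀ p, B1 p → 0 < p.1.valMinAbs * p.2.valMinAbs ∧
        |p.1.valMinAbs| ≤ |p.2.valMinAbs| := by
      rintro ⟨k, l⟩ ⟨⟨h1, h2⟩, h3, h4⟩
      simp only [shr, Equiv.coe_fn_mk] at h1 h2 h3 h4 ⊢
      have e := vma_add h4 h3
      rw [sub_add_cancel] at e
      set a := k.valMinAbs
      set b := (l - k).valMinAbs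
      rw [e]
      constructor
      · have : 0 < a * a := mul_self_pos.2 h1
        nlinarith
      · rw [← sq_le_sq]; nlinarith [sq_nonneg b]
    have hb2 : ∀ p, B2 p → p.1.valMinAbs ≠ 0 ∧ 0 ≤ p.1.valMinAbs * p.2.valMinAbs ∧
        |p.2.valMinAbs| < |p.1.valMinAbs| := by
      rintro ⟨k, l⟩ ⟨⟨h1, h2⟩, h3, h4⟩
      simp only at h1 h2 h3 h4 ⊢
      have e := vma_add h3 h4
      rw [sub_add_cancel] at e
      set a := (k - l).valMinAbs
      set b := l.valMinAbs
      rw [e]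
      have : 0 < a * a := mul_self_pos.2 h1
      refine ⟨?_, ?_, ?_⟩
      · intro h0
        have hba : b = -a := by omega
        rw [hba] at h2
        nlinarith
      · nlinarith [mul_self_nonneg b]
      · rw [← sq_lt_sq]; nlinarith [sq_nonneg b]
    apply mass_disj w hw
    · intro p hp
      obtain ⟨h1, -⟩ := hb1 p hp
      exact ⟨fun h0 => by rw [h0] at h1; simp at h1, h1.le⟩
    · intro p hp
      obtain ⟨h1, h2, -⟩ := hb2 p hp
      exact ⟨h1, h2⟩
    · intro p hp hp'
      exact absurd (hb1 p hp).2 (not_le.2 (hb2 p hp').2.2)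
  have hQ1 : mass w Q1 ≤ 10 * δ := by linarith
  have hQ2 : mass w Q2 ≤ 11 * δ := by
    have h1 := (abs_le.1 (hR' Q1)).1
    have h2 : mass w Q2 ≤ mass w (fun p => Q1 (rot p)) := by
      apply mass_mono w hw
      rintro ⟨k, l⟩ ⟨h1, h2⟩
      refine ⟨h1, ?_⟩
      simp only [rot, Equiv.coe_fn_mk, vma_neg] at h1 h2 ⊢
      linarith
    linarith
  have htot : ∑ p, w p ≤ mass w (fun p => p = 0 ∨ (Q1 p ∨ Q2 p)) := by
    refine Finset.sum_le_sum fun p _ => ?_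
    rw [if_pos]
    obtain ⟨k, l⟩ := p
    by_cases hk : k.valMinAbs = 0
    · by_cases hl : l.valMinAbs = 0
      · left
        rw [ZMod.valMinAbs_eq_zero] at hk hl
        simp [hk, hl]
      · right; right; exact ⟨hl, by simp [hk]⟩
    · right
      rcases le_or_gt 0 (k.valMinAbs * l.valMinAbs) with h | h
      · left; exact ⟨hk, h⟩
      · right; exact ⟨fun h0 => by simp only at h0; rw [h0] at h; simp at h, h.le⟩
  have h1 := mass_or w hw (fun p => p = 0) (fun p => Q1 p ∨ Q2 p)
  have h2 := mass_or w hw Q1 Q2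
  have h3 : mass w (fun p => p = 0) = w 0 := by
    unfold mass
    exact (Finset.sum_eq_single (0 : ZMod (2 * q + 1) × ZMod (2 * q + 1)) (fun p _ hp => if_neg hp)
      (fun h => absurd (Finset.mem_univ _) h)).trans (if_pos rfl)
  linarith

end pingpong
end QE

namespace QE
open Matrix

section gap
variable {q : ℕ}

local notation "Zm" => ZMod (2 * q + 1)

/-- standard character -/
abbrev ps : AddChar (ZMod (2 * q + 1)) ℂ := ZMod.stdAddChar

lemma ps_norm (x : Zm) : ‖ps x‖ = 1 := AddChar.norm_apply _ _

lemma ps_star (x : Zm) : star (ps x) = ps (-x) := (AddChar.map_neg_eq_conj _ _).symm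

lemma ps_sum (k : Zm) : ∑ i : Zm, ps (i * k) = if k = 0 then ((2 * q + 1 : ℕ) : ℂ) else 0 := by
  have := AddChar.sum_mulShift k (ZMod.isPrimitive_stdAddChar (2 * q + 1))
  rw [ZMod.card, Nat.cast_ite, Nat.cast_zero] at this
  exact this

/-- clock -/
def Zmat (q : ℕ) : Matrix (ZMod (2 * q + 1)) (ZMod (2 * q + 1)) ℂ := diagonal fun i => ps i

/-- chirp -/
def Dmat (q : ℕ) : Matrix (ZMod (2 * q + 1)) (ZMod (2 * q + 1)) ℂ :=
  diagonal fun i => ps (((q : ZMod (2 * q + 1)) + 1) * (i * i))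

/-- Fourier -/
def Fmat (q : ℕ) : Matrix (ZMod (2 * q + 1)) (ZMod (2 * q + 1)) ℂ :=
  of fun i j => (((√(2 * q + 1 : ℕ))⁻¹ : ℝ) : ℂ) * ps (i * j)

/-- Weyl transform -/
def hat (h : Matrix Zm Zm ℂ) (p : Zm × Zm) : ℂ := ∑ i, h (i + p.1) i * ps (-(p.2 * i))

lemma hat_sub (h k : Matrix Zm Zm ℂ) (p : Zm × Zm) : hat (h - k) p = hat h p - hat k p := by
  simp [hat, sub_mul]

lemma hat_zero (h : Matrix Zm Zm ℂ) : hat h 0 = trace h := by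
  simp [hat, trace]

lemma parseval1 (g : Zm → ℂ) :
    ∑ l : Zm, ‖∑ i, g i * ps (-(l * i))‖ ^ 2 = (2 * q + 1 : ℕ) * ∑ i, ‖g i‖ ^ 2 := by
  have : ((∑ l : Zm, ‖∑ i, g i * ps (-(l * i))‖ ^ 2 : ℝ) : ℂ)
      = (((2 * q + 1 : ℕ) * ∑ i, ‖g i‖ ^ 2 : ℝ) : ℂ) := by
    rw [Complex.ofReal_sum]
    calc _ = ∑ l : Zm, ∑ i, ∑ j, g i * star (g j) * ps (l * (j - i)) := by
          refine Finset.sum_congr rfl fun l _ => ?_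
          rw [Complex.ofReal_pow, ← Complex.mul_conj', map_sum, Finset.sum_mul_sum]
          refine Finset.sum_congr rfl fun i _ => Finset.sum_congr rfl fun j _ => ?_
          rw [map_mul, ← Complex.star_def, ps_star,
            show l * (j - i) = -(l * i) + -(-(l * j)) by ring, AddChar.map_add_eq_mul]
          ring
      _ = ∑ i, ∑ j, g i * star (g j) * ∑ l : Zm, ps (l * (j - i)) := by
          rw [Finset.sum_comm]
          refine Finset.sum_congr rfl fun i _ => ?_
          rw [Finset.sum_comm]
          refine Finset.sum_congr rfl fun j _ => ?_
          rw [Finset.mul_sum]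
      _ = ∑ i, g i * star (g i) * (2 * q + 1 : ℕ) := by
          refine Finset.sum_congr rfl fun i _ => ?_
          rw [Finset.sum_eq_single i]
          · rw [ps_sum, if_pos (sub_self i)]
          · intro j _ hj
            rw [ps_sum, if_neg (sub_ne_zero.2 hj), mul_zero]
          · simp
      _ = _ := by
          rw [← Finset.sum_mul, mul_comm, Complex.ofReal_mul, Complex.ofReal_sum]
          congr 1
          refine Finset.sum_congr rfl fun i _ => ?_
          rw [Complex.star_def, Complex.mul_conj']
          simp
  exact_mod_cast this

lemma parseval (h : Matrix Zm Zm ℂ) :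
    ∑ p, ‖hat h p‖ ^ 2 = (2 * q + 1 : ℕ) * frob h := by
  rw [Fintype.sum_prod_type]
  simp only [hat]
  have : ∀ k : Zm, ∑ l : Zm, ‖∑ i, h (i + k) i * ps (-(l * i))‖ ^ 2
      = (2 * q + 1 : ℕ) * ∑ i, ‖h (i + k) i‖ ^ 2 := fun k => parseval1 fun i => h (i + k) i
  simp only [this]
  rw [← Finset.mul_sum, Finset.sum_comm]
  congr 1
  unfold frob
  rw [Finset.sum_comm (f := fun i j => ‖h i j‖ ^ 2)]
  refine Finset.sum_congr rfl fun i _ => ?_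
  exact Equiv.sum_comp (Equiv.addLeft i) (fun k => ‖h k i‖ ^ 2)

lemma Zmat_unitary : (Zmat q)ᴴ * Zmat q = 1 := by
  rw [Zmat, diagonal_conjTranspose, diagonal_mul_diagonal, ← diagonal_one]
  congr 1; ext i
  simp only [Pi.star_apply]
  rw [ps_star, ← AddChar.map_add_eq_mul]
  simp

lemma Dmat_unitary : (Dmat q)ᴴ * Dmat q = 1 := by
  rw [Dmat, diagonal_conjTranspose, diagonal_mul_diagonal, ← diagonal_one]
  congr 1; ext i
  simp only [Pi.star_apply]
  rw [ps_star, ← AddChar.map_add_eq_mul]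
  simp

lemma sqrt_inv_sq : ((((√(2 * q + 1 : ℕ))⁻¹ : ℝ) : ℂ)) * ((((√(2 * q + 1 : ℕ))⁻¹ : ℝ) : ℂ)) =
    (((2 * q + 1 : ℕ)) : ℂ)⁻¹ := by
  rw [← Complex.ofReal_mul, ← mul_inv, Real.mul_self_sqrt (by positivity)]
  simp

lemma Fmat_unitary : (Fmat q)ᴴ * Fmat q = 1 := by
  ext i j
  simp only [Fmat, mul_apply, conjTranspose_apply, of_apply, star_mul', ps_star, one_apply]
  have : ∀ x : Zm, star (((√(2 * q + 1 : ℕ))⁻¹ : ℝ) : ℂ) * ps (-(x * i)) *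
      ((((√(2 * q + 1 : ℕ))⁻¹ : ℝ) : ℂ) * ps (x * j)) =
      (((2 * q + 1 : ℕ)) : ℂ)⁻¹ * ps (x * (j - i)) := by
    intro x
    rw [← sqrt_inv_sq, show x * (j - i) = -(x * i) + x * j by ring, AddChar.map_add_eq_mul,
      Complex.star_def, Complex.conj_ofReal]
    ring
  simp only [this]
  rw [← Finset.mul_sum, ps_sum]
  by_cases hij : i = j
  · rw [if_pos (by simp [hij]), if_pos hij]
    exact inv_mul_cancel₀ (by exact_mod_cast (by omega : 2 * q + 1 ≠ 0))
  · rw [if_neg (sub_ne_zero.2 (Ne.symm hij)), if_neg hij, mul_zero]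

lemma hat_Z (h : Matrix Zm Zm ℂ) (p : Zm × Zm) :
    hat (Zmat q * h * (Zmat q)ᴴ) p = ps p.1 * hat h p := by
  simp only [hat, Zmat, diagonal_conjTranspose, mul_diagonal, diagonal_mul, Pi.star_apply, ps_star]
  rw [Finset.mul_sum]
  refine Finset.sum_congr rfl fun i _ => ?_
  have : ps p.1 = ps (i + p.1) * ps (-i) := by
    rw [← AddChar.map_add_eq_mul]; congr 1; ring
  rw [this]; ring

lemma two_inv : ((q : Zm) + 1) * 2 = 1 := by
  have : ((2 * q + 1 : ℕ) : Zm) = 0 := ZMod.natCast_self _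
  push_cast at this
  linear_combination this

lemma hat_D (h : Matrix Zm Zm ℂ) (p : Zm × Zm) :
    hat (Dmat q * h * (Dmat q)ᴴ) p = ps (((q : ZMod (2 * q + 1)) + 1) * (p.1 * p.1)) * hat h (shr p) := by
  simp only [hat, Dmat, diagonal_conjTranspose, mul_diagonal, diagonal_mul, Pi.star_apply, ps_star,
    shr, Equiv.coe_fn_mk]
  rw [Finset.mul_sum]
  refine Finset.sum_congr rfl fun i _ => ?_
  have : ps (((q : ZMod (2 * q + 1)) + 1) * ((i + p.1) * (i + p.1))) * ps (-(((q : ZMod (2 * q + 1)) + 1) * (i * i))) * ps (-(p.2 * i)) =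
      ps (((q : ZMod (2 * q + 1)) + 1) * (p.1 * p.1)) * ps (-((p.2 - p.1) * i)) := by
    rw [← AddChar.map_add_eq_mul, ← AddChar.map_add_eq_mul, ← AddChar.map_add_eq_mul]
    congr 1
    linear_combination (p.1 * i) * two_inv (q := q)
  linear_combination (h (i + p.1) i) * this

lemma hat_F (h : Matrix Zm Zm ℂ) (p : Zm × Zm) :
    hat (Fmat q * h * (Fmat q)ᴴ) p = ps (p.1 * p.2) * hat h (rot p) := by
  obtain ⟨k, l⟩ := p
  simp only [hat, Fmat, mul_apply, conjTranspose_apply, of_apply, star_mul', ps_star,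
    rot, Equiv.coe_fn_mk]
  have e : ∀ i : Zm, (∑ b, (∑ a, (((√(2 * q + 1 : ℕ))⁻¹ : ℝ) : ℂ) * ps ((i + k) * a) * h a b) *
      (star (((√(2 * q + 1 : ℕ))⁻¹ : ℝ) : ℂ) * ps (-(i * b)))) * ps (-(l * i)) =
      ∑ b, ∑ a, (((2 * q + 1 : ℕ)) : ℂ)⁻¹ * h a b * ps (k * a) * ps (i * (a - b - l)) := by
    intro i
    rw [Finset.sum_mul]
    refine Finset.sum_congr rfl fun b _ => ?_
    rw [Finset.sum_mul, Finset.sum_mul]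
    refine Finset.sum_congr rfl fun a _ => ?_
    have : ps (k * a) * ps (i * (a - b - l)) = ps ((i + k) * a) * ps (-(i * b)) * ps (-(l * i)) := by
      rw [← AddChar.map_add_eq_mul, ← AddChar.map_add_eq_mul, ← AddChar.map_add_eq_mul]
      congr 1; ring
    rw [← sqrt_inv_sq, Complex.star_def, Complex.conj_ofReal, mul_assoc _ (ps (k * a)), this]
    ring
  simp only [e]
  rw [Finset.sum_comm, Finset.mul_sum]
  refine Finset.sum_congr rfl fun b _ => ?_
  rw [Finset.sum_comm]
  simp only [← Finset.mul_sum, ps_sum]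
  rw [Finset.sum_eq_single (b + l)]
  · rw [if_pos (by ring)]
    have : ps (k * (b + l)) = ps (k * l) * ps (-(-k * b)) := by
      rw [← AddChar.map_add_eq_mul]; congr 1; ring
    rw [this]
    have : ((2 * q + 1 : ℕ) : ℂ) ≠ 0 := by exact_mod_cast (by omega : 2 * q + 1 ≠ 0)
    field_simp
  · intro a _ ha
    rw [if_neg, mul_zero]
    intro h0
    exact ha (by linear_combination h0)
  · simp

lemma far_norm {k : Zm} (hk : ¬ near k) : 1 ≤ ‖ps k - 1‖ := by
  unfold near at hk
  push Not at hk
  have hb := ZMod.natAbs_valMinAbs_le k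
  set a := k.valMinAbs with ha
  have e : ps k = Complex.exp (2 * Real.pi * Complex.I * a / (2 * q + 1 : ℕ)) := by
    rw [← ZMod.stdAddChar_coe, ha, ZMod.coe_valMinAbs]
  have e2 : ps k = Complex.exp ((2 * Real.pi * a / (2 * q + 1 : ℕ) : ℝ) * Complex.I) := by
    rw [e]; congr 1; push_cast; ring
  have hre : (ps k).re ≤ 0 := by
    rw [e2, Complex.exp_ofReal_mul_I_re, ← Real.cos_abs, abs_div, abs_mul,
      abs_of_pos (by positivity : (0:ℝ) < 2 * Real.pi), Nat.abs_cast]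
    have h1 : ((2 * q + 1 : ℕ) : ℝ) ≤ 4 * |(a : ℝ)| := by
      have : ((2 * q + 1 : ℕ) : ℤ) ≤ 4 * |a| := by push_cast; exact hk
      exact_mod_cast this
    have h2 : 2 * |(a : ℝ)| ≤ ((2 * q + 1 : ℕ) : ℝ) := by
      have : 2 * |a| ≤ ((2 * q + 1 : ℕ) : ℤ) := by rw [Int.abs_eq_natAbs]; omega
      exact_mod_cast this
    have hm : (0 : ℝ) < ((2 * q + 1 : ℕ) : ℝ) := by positivity
    apply Real.cos_nonpos_of_pi_div_two_le_of_le
    · rw [le_div_iff₀ hm]; nlinarith [Real.pi_pos]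
    · rw [div_le_iff₀ hm]; nlinarith [Real.pi_pos]
  have := Complex.abs_re_le_norm (ps k - 1)
  rw [Complex.sub_re, Complex.one_re] at this
  have h3 := neg_abs_le ((ps k).re - 1)
  linarith

lemma mass_diff (h : Matrix Zm Zm ℂ) (U : Matrix Zm Zm ℂ) (σ : Equiv.Perm (Zm × Zm))
    (ph : Zm × Zm → ℂ) (hph : ∀ p, ‖ph p‖ = 1)
    (hat_U : ∀ p, hat (U * h * Uᴴ) p = ph p * hat h (σ p)) (r : ℝ) (hr : 0 ≤ r)
    (hf : frob (U * h * Uᴴ - h) ≤ r ^ 2 * frob h) (P : Zm × Zm → Prop) :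
    |mass (fun p => ‖hat h (σ p)‖ ^ 2) P - mass (fun p => ‖hat h p‖ ^ 2) P| ≤
      2 * r * ((2 * q + 1 : ℕ) * frob h) := by
  classical
  set m : ℝ := ((2 * q + 1 : ℕ) : ℝ) with hm
  have hm0 : 0 ≤ m := by positivity
  set a : Zm × Zm → ℝ := fun p => ‖hat h (σ p)‖ with ha
  set b : Zm × Zm → ℝ := fun p => ‖hat h p‖ with hb
  have hsb : ∑ p, b p ^ 2 = m * frob h := parseval h
  have hsa : ∑ p, a p ^ 2 = m * frob h := by
    rw [← hsb]; exact Equiv.sum_comp σ (fun p => b p ^ 2)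
  have hd : ∑ p, |a p - b p| ^ 2 ≤ r ^ 2 * (m * frob h) := by
    calc _ ≤ ∑ p, ‖hat (U * h * Uᴴ - h) p‖ ^ 2 := by
          refine Finset.sum_le_sum fun p _ => ?_
          refine pow_le_pow_left₀ (abs_nonneg _) ?_ 2
          rw [hat_sub, hat_U]
          have := abs_norm_sub_norm_le (ph p * hat h (σ p)) (hat h p)
          rwa [norm_mul, hph, one_mul] at this
      _ = m * frob (U * h * Uᴴ - h) := parseval _
      _ ≤ m * (r ^ 2 * frob h) := by gcongr
      _ = _ := by ring
  have hs : ∑ p, (a p + b p) ^ 2 ≤ 4 * (m * frob h) := by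
    calc _ ≤ ∑ p, (2 * a p ^ 2 + 2 * b p ^ 2) :=
          Finset.sum_le_sum fun p _ => by nlinarith [sq_nonneg (a p - b p)]
      _ = _ := by rw [Finset.sum_add_distrib, ← Finset.mul_sum, ← Finset.mul_sum, hsa, hsb]; ring
  have hM : 0 ≤ m * frob h := mul_nonneg hm0 (frob_nonneg h)
  calc _ ≤ ∑ p, |a p - b p| * (a p + b p) := by
        unfold mass
        rw [← Finset.sum_sub_distrib]
        refine (Finset.abs_sum_le_sum_abs _ _).trans (Finset.sum_le_sum fun p _ => ?_)
        have ha0 : 0 ≤ a p := norm_nonneg _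
        have hb0 : 0 ≤ b p := norm_nonneg _
        split_ifs
        · change |a p ^ 2 - b p ^ 2| ≤ _
          rw [sq_sub_sq, abs_mul, abs_of_nonneg (add_nonneg ha0 hb0), mul_comm]
        · simp only [sub_self, abs_zero]; positivity
    _ ≤ √(∑ p, |a p - b p| ^ 2) * √(∑ p, (a p + b p) ^ 2) := Real.sum_mul_le_sqrt_mul_sqrt _ _ _
    _ ≤ √(r ^ 2 * (m * frob h)) * √(4 * (m * frob h)) := by gcongr
    _ = _ := by
        rw [← Real.sqrt_mul (by positivity),
          show r ^ 2 * (m * frob h) * (4 * (m * frob h)) = (2 * r * (m * frob h)) ^ 2 by ring,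
          Real.sqrt_sq (by positivity)]

lemma spectral_gap (h : Matrix Zm Zm ℂ)
    (hZ : frob (Zmat q * h * (Zmat q)ᴴ - h) ≤ (1 / 84) ^ 2 * frob h)
    (hD : frob (Dmat q * h * (Dmat q)ᴴ - h) ≤ (1 / 84) ^ 2 * frob h)
    (hF : frob (Fmat q * h * (Fmat q)ᴴ - h) ≤ (1 / 84) ^ 2 * frob h) :
    (2 * q + 1 : ℕ) * frob h ≤ 2 * ‖trace h‖ ^ 2 := by
  classical
  set m : ℝ := ((2 * q + 1 : ℕ) : ℝ) with hm
  have hm0 : 0 ≤ m := by positivity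
  have hM : 0 ≤ m * frob h := mul_nonneg hm0 (frob_nonneg h)
  have key := pingpong (fun p => ‖hat h p‖ ^ 2) (fun p => by positivity)
    (2 * (1 / 84) * (m * frob h))
    (mass_diff h _ rot (fun p => ps (p.1 * p.2)) (fun p => ps_norm _) (hat_F h) _ (by norm_num) hF)
    (mass_diff h _ shr (fun p => ps (((q : ZMod (2 * q + 1)) + 1) * (p.1 * p.1))) (fun p => ps_norm _) (hat_D h) _
      (by norm_num) hD) ?_
  · rw [hat_zero, parseval] at key
    linarith
  · calc _ ≤ ∑ p, ‖hat (Zmat q * h * (Zmat q)ᴴ - h) p‖ ^ 2 := by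
          unfold mass
          refine Finset.sum_le_sum fun p _ => ?_
          split_ifs with hp
          · refine pow_le_pow_left₀ (norm_nonneg _) ?_ 2
            rw [hat_sub, hat_Z, ← sub_one_mul, norm_mul]
            have := far_norm hp
            nlinarith [norm_nonneg (hat h p)]
          · positivity
      _ = m * frob (Zmat q * h * (Zmat q)ᴴ - h) := parseval _
      _ ≤ m * ((1 / 84) ^ 2 * frob h) := by gcongr
      _ ≤ _ := by nlinarith

end gap
end QE

namespace QE
open Matrix
open scoped Matrix.Norms.L2Operator ComplexOrder
set_option linter.unusedSectionVars false

section assembly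

variable {ι κ : Type*} [Fintype ι] [DecidableEq ι] [Fintype κ] [DecidableEq κ]

/-- extension of a unitary on the small space by the identity -/
def ext1 (J : Matrix ι κ ℂ) (U : Matrix κ κ ℂ) : Matrix ι ι ℂ := J * U * Jᴴ + (1 - J * Jᴴ)

lemma ext1_mul_J {J : Matrix ι κ ℂ} (hJ : Jᴴ * J = 1) (U : Matrix κ κ ℂ) :
    ext1 J U * J = J * U := by
  rw [ext1, Matrix.add_mul, Matrix.sub_mul, Matrix.mul_assoc, hJ, Matrix.mul_assoc J Jᴴ, hJ]
  simp

lemma J_mul_ext1 {J : Matrix ι κ ℂ} (hJ : Jᴴ * J = 1) (U : Matrix κ κ ℂ) :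
    Jᴴ * ext1 J U = U * Jᴴ := by
  rw [ext1, Matrix.mul_add, Matrix.mul_sub, Matrix.mul_assoc J, ← Matrix.mul_assoc Jᴴ J, hJ,
    ← Matrix.mul_assoc Jᴴ J, hJ]
  simp

lemma ext1_unitary {J : Matrix ι κ ℂ} (hJ : Jᴴ * J = 1) {U : Matrix κ κ ℂ} (hU : Uᴴ * U = 1) :
    (ext1 J U)ᴴ * ext1 J U = 1 := by
  have h1 : (ext1 J U)ᴴ = ext1 J Uᴴ := by
    simp [ext1, conjTranspose_mul, Matrix.mul_assoc]
  rw [h1]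
  conv_lhs => rw [ext1.eq_def J U]
  rw [Matrix.mul_add, Matrix.mul_sub, ← Matrix.mul_assoc, ← Matrix.mul_assoc, ← Matrix.mul_assoc,
    ext1_mul_J hJ, Matrix.mul_assoc J, hU, Matrix.mul_one, Matrix.mul_one, ext1]
  abel

/-- the column of index e -/
def colm (e : ι) (A : Matrix κ ι ℂ) : Matrix κ Unit ℂ := A.submatrix id fun _ => e
/-- the row of index e -/
def rowm (e : ι) (B : Matrix ι κ ℂ) : Matrix Unit κ ℂ := B.submatrix (fun _ => e) id

lemma colm_smul (e : ι) (c : ℂ) (A : Matrix κ ι ℂ) : colm e (c • A) = c • colm e A := rfl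

lemma rowm_smul (e : ι) (c : ℂ) (A : Matrix ι κ ℂ) : rowm e (c • A) = c • rowm e A := rfl

lemma colm_mul (e : ι) (U : Matrix κ κ ℂ) (A : Matrix κ ι ℂ) : colm e (U * A) = U * colm e A := rfl

lemma rowm_mul (e : ι) (A : Matrix ι κ ℂ) (U : Matrix κ κ ℂ) : rowm e (A * U) = rowm e A * U := rfl

lemma sum_col_row (A : Matrix κ ι ℂ) (B : Matrix ι κ ℂ) :
    ∑ e, colm e A * rowm e B = A * B := by
  ext i j
  simp [Matrix.sum_apply, mul_apply, colm, rowm]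

lemma TB_mul {μ : Type*} [Fintype μ] [DecidableEq μ] (A : Matrix κ μ ℂ) (B : Matrix μ κ ℂ) :
    TB (A * B) (√(frob A) * √(frob B)) := by
  intro W hW
  rw [← Matrix.mul_assoc, trace_mul_comm]
  have := trace_cs Bᴴ (W * A)
  rw [conjTranspose_conjTranspose, frob_conjTranspose, mul_comm] at this
  refine this.trans ?_
  have h2 : frob (W * A) ≤ frob A := by
    refine (frob_mul_le W A).trans ?_
    have : ‖W‖ ^ 2 ≤ 1 := pow_le_one₀ (norm_nonneg _) hW
    nlinarith [frob_nonneg A]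
  gcongr

lemma TB_sum {σ : Type*} (s : Finset σ) (X : σ → Matrix κ κ ℂ) (c : σ → ℝ)
    (h : ∀ l ∈ s, TB (X l) (c l)) : TB (∑ l ∈ s, X l) (∑ l ∈ s, c l) := by
  intro W hW
  rw [Matrix.mul_sum, trace_sum]
  exact (norm_sum_le _ _).trans (Finset.sum_le_sum fun l hl => h l hl W hW)

lemma sum_frob_col (A : Matrix κ ι ℂ) : ∑ e, frob (colm e A) = frob A := by
  simp only [frob, colm, submatrix_apply, Finset.univ_unique, Finset.sum_singleton, id]
  exact Finset.sum_comm

lemma sum_frob_row (A : Matrix ι κ ℂ) : ∑ e, frob (rowm e A) = frob A := by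
  simp only [frob, rowm, submatrix_apply, Finset.univ_unique, Finset.sum_singleton, id]

lemma frob_iso {J : Matrix ι κ ℂ} (hJ : Jᴴ * J = 1) : frob J = Fintype.card κ := by
  have := trace_conj_mul J
  rw [hJ, trace_one] at this
  exact_mod_cast this.symm

lemma sum_c_le {J : Matrix ι κ ℂ} (hJ : Jᴴ * J = 1) (X Y : Matrix ι ι ℂ) :
    ∑ e, √(frob (colm e (Jᴴ * X))) * √(frob (rowm e (Y * J))) ≤ Fintype.card κ * (‖X‖ * ‖Y‖) := by
  have h1 : frob (Jᴴ * X) ≤ ‖X‖ ^ 2 * Fintype.card κ := by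
    rw [← frob_iso hJ, ← frob_conjTranspose J]; exact frob_mul_le' _ _
  have h2 : frob (Y * J) ≤ ‖Y‖ ^ 2 * Fintype.card κ := by
    rw [← frob_iso hJ]; exact frob_mul_le _ _
  calc _ ≤ √(∑ e, √(frob (colm e (Jᴴ * X))) ^ 2) * √(∑ e, √(frob (rowm e (Y * J))) ^ 2) :=
        Real.sum_mul_le_sqrt_mul_sqrt _ _ _
    _ = √(frob (Jᴴ * X)) * √(frob (Y * J)) := by
        simp only [Real.sq_sqrt (frob_nonneg _), sum_frob_col, sum_frob_row]
    _ ≤ √(‖X‖ ^ 2 * Fintype.card κ) * √(‖Y‖ ^ 2 * Fintype.card κ) := by gcongr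
    _ = _ := by
        rw [← Real.sqrt_mul (by positivity),
          show ‖X‖ ^ 2 * (Fintype.card κ : ℝ) * (‖Y‖ ^ 2 * Fintype.card κ)
            = (Fintype.card κ * (‖X‖ * ‖Y‖)) ^ 2 by ring, Real.sqrt_sq (by positivity)]

variable {M : Type*} [NormedRing M] [NormedAlgebra ℂ M]

/-- The bilinear compression map at index e. -/
def Psi (ρ : M →ₐ[ℂ] Matrix ι ι ℂ) (J : Matrix ι κ ℂ) (e : ι) : M ⊗[ℂ] M →ₗ[ℂ] Matrix κ κ ℂ :=
  TensorProduct.lift (LinearMap.mk₂ ℂ (fun a b => colm e (Jᴴ * ρ a) * rowm e (ρ b * J))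
    (fun a a' b => by
      rw [map_add, Matrix.mul_add, ← Matrix.add_mul]; rfl)
    (fun c a b => by
      rw [map_smul, Matrix.mul_smul, colm_smul, Matrix.smul_mul])
    (fun a b b' => by
      rw [map_add, Matrix.add_mul, ← Matrix.mul_add]; rfl)
    (fun c a b => by
      rw [map_smul, Matrix.smul_mul, rowm_smul, Matrix.mul_smul]))

lemma Psi_tmul (ρ : M →ₐ[ℂ] Matrix ι ι ℂ) (J : Matrix ι κ ℂ) (e : ι) (a b : M) :
    Psi ρ J e (a ⊗ₜ b) = colm e (Jᴴ * ρ a) * rowm e (ρ b * J) := by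
  simp [Psi]

lemma Psi_actL (ρ : M →ₐ[ℂ] Matrix ι ι ℂ) {J : Matrix ι κ ℂ} (hJ : Jᴴ * J = 1) (e : ι)
    (u : M) (U : Matrix κ κ ℂ) (hu : ρ u = ext1 J U) (T : M ⊗[ℂ] M) :
    Psi ρ J e (actL u T) = U * Psi ρ J e T := by
  induction T with
  | zero => simp
  | add x y hx hy => rw [map_add, map_add, map_add, hx, hy, Matrix.mul_add]
  | tmul a b =>
    rw [actL, TensorProduct.map_tmul, Psi_tmul, Psi_tmul, LinearMap.mulLeft_apply, map_mul, hu,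
      ← Matrix.mul_assoc, J_mul_ext1 hJ, Matrix.mul_assoc U, colm_mul, Matrix.mul_assoc U]
    rfl

lemma Psi_actR (ρ : M →ₐ[ℂ] Matrix ι ι ℂ) {J : Matrix ι κ ℂ} (hJ : Jᴴ * J = 1) (e : ι)
    (u : M) (U : Matrix κ κ ℂ) (hu : ρ u = ext1 J U) (T : M ⊗[ℂ] M) :
    Psi ρ J e (actR u T) = Psi ρ J e T * U := by
  induction T with
  | zero => simp
  | add x y hx hy => rw [map_add, map_add, map_add, hx, hy, Matrix.add_mul]
  | tmul a b =>
    rw [actR, TensorProduct.map_tmul, Psi_tmul, Psi_tmul, LinearMap.mulRight_apply, map_mul, hu,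
      Matrix.mul_assoc, ext1_mul_J hJ, ← Matrix.mul_assoc (ρ b), rowm_mul, ← Matrix.mul_assoc]
    rfl

lemma sum_Psi (ρ : M →ₐ[ℂ] Matrix ι ι ℂ) (J : Matrix ι κ ℂ) (T : M ⊗[ℂ] M) :
    ∑ e, Psi ρ J e T = Jᴴ * ρ (LinearMap.mul' ℂ M T) * J := by
  induction T with
  | zero => simp
  | add x y hx hy =>
    simp only [map_add, Finset.sum_add_distrib, hx, hy, Matrix.add_mul, Matrix.mul_add]
  | tmul a b =>
    simp only [Psi_tmul, sum_col_row, LinearMap.mul'_apply, map_mul, Matrix.mul_assoc]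

lemma Psi_rank (ρ : M →ₐ[ℂ] Matrix ι ι ℂ) (J : Matrix ι κ ℂ) (e : ι) (r : ℕ) (a b : Fin r → M) :
    (Psi ρ J e (∑ i, a i ⊗ₜ b i)).rank ≤ r := by
  have : Psi ρ J e (∑ i, a i ⊗ₜ b i) =
      (of fun i l => (Jᴴ * ρ (a l)) i e : Matrix κ (Fin r) ℂ) *
      (of fun l j => (ρ (b l) * J) e j : Matrix (Fin r) κ ℂ) := by
    rw [map_sum]
    ext i j
    simp only [Psi_tmul, Matrix.sum_apply]
    simp [mul_apply, colm, rowm]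
  rw [this]
  refine (rank_mul_le_left _ _).trans ?_
  simpa using rank_le_card_width (of fun i l => (Jᴴ * ρ (a l)) i e : Matrix κ (Fin r) ℂ)

lemma exists_rep (T : M ⊗[ℂ] M) : ∃ (r : ℕ) (a b : Fin r → M), T = ∑ i, a i ⊗ₜ[ℂ] b i := by
  induction T with
  | zero => exact ⟨0, fun _ => 0, fun _ => 0, by simp⟩
  | tmul a b => exact ⟨1, fun _ => a, fun _ => b, by simp⟩
  | add x y hx hy =>
    obtain ⟨r, a, b, rfl⟩ := hx
    obtain ⟨s, c, d, rfl⟩ := hy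
    refine ⟨r + s, Fin.append a c, Fin.append b d, ?_⟩
    simp [Fin.sum_univ_add]

lemma exists_rep_lt {T : M ⊗[ℂ] M} {ε : ℝ} (h : projSeminorm T < ε) :
    ∃ (r : ℕ) (a b : Fin r → M), T = ∑ i, a i ⊗ₜ[ℂ] b i ∧ ∑ i, ‖a i‖ * ‖b i‖ < ε := by
  have hne : {s : ℝ | ∃ (n : ℕ) (x : Fin n → M) (y : Fin n → M),
      T = ∑ j, x j ⊗ₜ[ℂ] y j ∧ s = ∑ j, ‖x j‖ * ‖y j‖}.Nonempty := by
    obtain ⟨r, a, b, hT⟩ := exists_rep T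
    exact ⟨_, r, a, b, hT, rfl⟩
  obtain ⟨s, ⟨r, a, b, hT, rfl⟩, hs⟩ := exists_lt_of_csInf_lt hne h
  exact ⟨r, a, b, hT, hs⟩

/-- The three unitaries. -/
def Vm (q : ℕ) (j : Fin 3) : Matrix (ZMod (2 * q + 1)) (ZMod (2 * q + 1)) ℂ :=
  ![Zmat q, Dmat q, Fmat q] j

lemma Vm_unitary (q : ℕ) (j : Fin 3) : (Vm q j)ᴴ * Vm q j = 1 := by
  fin_cases j
  · exact Zmat_unitary
  · exact Dmat_unitary
  · exact Fmat_unitary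

lemma no_diag (ρ : M →ₐ[ℂ] Matrix ι ι ℂ) (hρ : ∀ x, ‖ρ x‖ ≤ ‖x‖) (q : ℕ)
    {J : Matrix ι (ZMod (2 * q + 1)) ℂ} (hJ : Jᴴ * J = 1) (u : Fin 3 → M)
    (hu : ∀ j, ρ (u j) = ext1 J (Vm q j)) (r : ℕ) (a b : Fin r → M) (hr : 2 * r < 2 * q + 1)
    (T : M ⊗[ℂ] M) (hT : T = ∑ i, a i ⊗ₜ b i) (hT1 : LinearMap.mul' ℂ M T = 1)
    (hsm : ∀ j, projSeminorm (actL (u j) T - actR (u j) T) < (1 / 10 ^ 11 : ℝ)) : False := by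
  choose L x y hxy hlt using fun j => exists_rep_lt (hsm j)
  set m : ℝ := ((2 * q + 1 : ℕ) : ℝ) with hm
  have hm0 : 0 < m := by positivity
  set c : ι → Fin 3 → ℝ := fun e j => ∑ l, √(frob (colm e (Jᴴ * ρ (x j l)))) *
    √(frob (rowm e (ρ (y j l) * J))) with hc
  have hc0 : ∀ e j, 0 ≤ c e j := fun e j => Finset.sum_nonneg fun l _ => by positivity
  have hTB : ∀ e j, TB (Vm q j * Psi ρ J e T - Psi ρ J e T * Vm q j) (c e j) := by
    intro e j
    rw [← Psi_actL ρ hJ e (u j) _ (hu j), ← Psi_actR ρ hJ e (u j) _ (hu j), ← map_sub, hxy,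
      map_sum]
    refine TB_sum _ _ _ fun l _ => ?_
    rw [Psi_tmul]
    exact TB_mul _ _
  have hcs : ∀ j, ∑ e, c e j < m * (1 / 10 ^ 11) := by
    intro j
    rw [hc]; simp only
    rw [Finset.sum_comm]
    calc _ ≤ ∑ l, m * (‖x j l‖ * ‖y j l‖) := by
          refine Finset.sum_le_sum fun l _ => (sum_c_le hJ _ _).trans ?_
          rw [ZMod.card]
          have := hρ (x j l)
          have := hρ (y j l)
          gcongr
      _ < _ := by
          rw [← Finset.mul_sum]
          exact mul_lt_mul_of_pos_left (hlt j) hm0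
  have htr : ∑ e, (trace (Psi ρ J e T)).re = m := by
    rw [← Complex.re_sum, ← trace_sum, sum_Psi, hT1, map_one, Matrix.mul_one, hJ, trace_one,
      ZMod.card, Complex.natCast_re]
  obtain ⟨e, he⟩ : ∃ e, ∑ j, c e j < 3 * (1 / 10 ^ 11) * (trace (Psi ρ J e T)).re := by
    by_contra hcon
    push Not at hcon
    have h1 := Finset.sum_le_sum fun e (_ : e ∈ Finset.univ) => hcon e
    rw [← Finset.mul_sum, htr, Finset.sum_comm] at h1
    have h2 := hcs 0
    have h3 := hcs 1
    have h4 := hcs 2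
    rw [Fin.sum_univ_three] at h1
    linarith
  obtain ⟨h, hh1, hh2, hh3⟩ := exists_h (Psi ρ J e T)
  have hF0 : 0 < frob h := by
    have : 0 ≤ ∑ j, c e j := Finset.sum_nonneg fun j _ => hc0 e j
    linarith
  have hgap : ∀ j, frob (Vm q j * h * (Vm q j)ᴴ - h) ≤ (1 / 84) ^ 2 * frob h := by
    intro j
    have h1 := hh3 (Vm q j) (c e j) (Vm_unitary q j)
      (mul_eq_one_comm.1 (Vm_unitary q j)) (hTB e j)
    have h2 : c e j ≤ 3 * (1 / 10 ^ 11) * frob h := by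
      have : c e j ≤ ∑ j, c e j := Finset.single_le_sum (fun j _ => hc0 e j) (Finset.mem_univ j)
      linarith
    have h3 : √(2 * c e j) * √(frob h) ≤ 1 / 10 ^ 5 * frob h := by
      rw [← Real.sqrt_mul (by linarith [hc0 e j])]
      apply Real.sqrt_le_iff.2 ⟨by positivity, ?_⟩
      nlinarith
    linarith
  have hsg := spectral_gap h (hgap 0) (hgap 1) (hgap 2)
  have hrank : ((Psi ρ J e T).rank : ℝ) ≤ r := by
    rw [hT]; exact_mod_cast Psi_rank ρ J e r a b
  have hlt : (2 * r : ℝ) < m := by rw [hm]; exact_mod_cast hr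
  have : (Psi ρ J e T).rank * frob h ≤ r * frob h := by gcongr
  nlinarith

/-- The tuple has compressions of arbitrarily large size. -/
def Good (M : Type*) [NormedRing M] [NormedAlgebra ℂ M] (u : Fin 3 → M) : Prop :=
  ∀ r : ℕ, ∃ (N q : ℕ) (J : Matrix (Fin N) (ZMod (2 * q + 1)) ℂ)
    (ρ : M → Matrix (Fin N) (Fin N) ℂ), 2 * r < 2 * q + 1 ∧ Jᴴ * J = 1 ∧
    (∀ j, ρ (u j) = ext1 J (Vm q j)) ∧ (∀ x, ‖ρ x‖ ≤ ‖x‖) ∧ (ρ 1 = 1) ∧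
    (∀ x y, ρ (x + y) = ρ x + ρ y) ∧ (∀ x y, ρ (x * y) = ρ x * ρ y) ∧
    (∀ (c : ℂ) x, ρ (c • x) = c • ρ x)

theorem Good.main {M : Type*} [NormedRing M] [NormedAlgebra ℂ M] {u : Fin 3 → M} (h : Good M u)
    (T : M ⊗[ℂ] M) (hT1 : LinearMap.mul' ℂ M T = 1) :
    ¬ (∀ j, projSeminorm (actL (u j) T - actR (u j) T) < (1 / 10 ^ 11 : ℝ)) := by
  intro hsm
  obtain ⟨r, a, b, hrep⟩ := exists_rep T
  obtain ⟨N, q, J, ρ, hr, hJ, hu, hn, h1, ha, hm, hs⟩ := h r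
  let ρ' : M →ₐ[ℂ] Matrix (Fin N) (Fin N) ℂ :=
    AlgHom.ofLinearMap { toFun := ρ, map_add' := ha, map_smul' := hs } h1 hm
  exact no_diag ρ' hn q hJ u hu r a b hr T hrep hT1 hsm

end assembly

end QE

namespace QE
open Matrix
open scoped Matrix.Norms.L2Operator ComplexOrder

set_option linter.unusedSectionVars false
section final

variable (n : ℕ → ℕ) (hpos : ∀ k, 0 < n k)

/-- the size parameter -/
def qq (k : ℕ) : ℕ := (n k - 1) / 2

/-- the embedding of index sets -/
def embf (k : ℕ) (hk : 0 < n k) : ZMod (2 * qq n k + 1) ↪ Fin (n k) where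
  toFun i := ⟨i.val, lt_of_lt_of_le (ZMod.val_lt i) (by unfold qq; omega)⟩
  inj' i j h := by
    simp only [Fin.mk.injEq] at h
    exact ZMod.val_injective _ h

/-- the isometry -/
def Jm (k : ℕ) (hk : 0 < n k) : Matrix (Fin (n k)) (ZMod (2 * qq n k + 1)) ℂ :=
  (1 : Matrix (Fin (n k)) (Fin (n k)) ℂ).submatrix id (embf n k hk)

lemma Jm_iso (k : ℕ) (hk : 0 < n k) : (Jm n k hk)ᴴ * Jm n k hk = 1 := by
  rw [Jm, conjTranspose_submatrix, conjTranspose_one, 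
    ← submatrix_mul _ _ _ _ _ Function.bijective_id, Matrix.mul_one, submatrix_one_embedding]

/-- component matrices of the unitaries -/
def um (j : Fin 3) (k : ℕ) : Matrix (Fin (n k)) (Fin (n k)) ℂ :=
  ext1 (Jm n k (hpos k)) (Vm (qq n k) j)

lemma um_unitary (j : Fin 3) (k : ℕ) : (um n hpos j k)ᴴ * um n hpos j k = 1 :=
  ext1_unitary (Jm_iso n k _) (Vm_unitary _ _)

variable [∀ k, Nontrivial (EuclideanSpace ℂ (Fin (n k)))]

/-- The unitaries of the direct sum. -/
def uu (j : Fin 3) : lpInftySum n :=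
  ⟨fun k => toEuclideanCLM (n := Fin (n k)) (𝕜 := ℂ) (um n hpos j k), memℓp_infty ⟨1, by
    rintro _ ⟨k, rfl⟩
    simp only [l2_opNorm_toEuclideanCLM]
    exact norm_le_one_of_unitary (um_unitary n hpos j k)⟩⟩

lemma uu_apply (j : Fin 3) (k : ℕ) :
    (uu n hpos j) k = toEuclideanCLM (n := Fin (n k)) (𝕜 := ℂ) (um n hpos j k) := rfl

lemma uu_unitary (j : Fin 3) : uu n hpos j ∈ unitary (lpInftySum n) := by
  rw [Unitary.mem_iff]
  constructor
  · apply lp.ext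
    funext k
    rw [lp.infty_coeFn_mul, lp.infty_coeFn_one, Pi.mul_apply, lp.star_apply, uu_apply, ← map_star,
      ← map_mul, star_eq_conjTranspose, um_unitary, map_one, Pi.one_apply]
  · apply lp.ext
    funext k
    rw [lp.infty_coeFn_mul, lp.infty_coeFn_one, Pi.mul_apply, lp.star_apply, uu_apply, ← map_star,
      ← map_mul, star_eq_conjTranspose, mul_eq_one_comm.1 (um_unitary n hpos j k), map_one,
      Pi.one_apply]

/-- Evaluation at a coordinate, as a matrix. -/
def evm (k : ℕ) (x : lpInftySum n) : Matrix (Fin (n k)) (Fin (n k)) ℂ :=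
  (toEuclideanCLM (n := Fin (n k)) (𝕜 := ℂ)).symm (x k)

lemma evm_norm (k : ℕ) (x : lpInftySum n) : ‖evm n k x‖ ≤ ‖x‖ := by
  rw [← l2_opNorm_toEuclideanCLM, evm, StarAlgEquiv.apply_symm_apply]
  exact lp.norm_apply_le_norm ENNReal.top_ne_zero x k

lemma evm_uu (j : Fin 3) (k : ℕ) :
    evm n k (uu n hpos j) = ext1 (Jm n k (hpos k)) (Vm (qq n k) j) := by
  rw [evm, uu_apply, StarAlgEquiv.symm_apply_apply, um]

lemma evm_one (k : ℕ) : evm n k 1 = 1 := by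
  rw [evm, lp.infty_coeFn_one, Pi.one_apply, map_one]

lemma evm_add (k : ℕ) (x y : lpInftySum n) : evm n k (x + y) = evm n k x + evm n k y := by
  rw [evm, lp.coeFn_add, Pi.add_apply, map_add]; rfl

lemma evm_mul (k : ℕ) (x y : lpInftySum n) : evm n k (x * y) = evm n k x * evm n k y := by
  rw [evm, lp.infty_coeFn_mul, Pi.mul_apply, map_mul]; rfl

lemma evm_smul (k : ℕ) (c : ℂ) (x : lpInftySum n) : evm n k (c • x) = c • evm n k x := by
  rw [evm, lp.coeFn_smul, Pi.smul_apply, map_smul]; rfl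

lemma good (hsup : ∀ N : ℕ, ∃ k, N ≤ n k) : Good (lpInftySum n) (uu n hpos) := by
  intro r
  obtain ⟨k, hk⟩ := hsup (2 * r + 10)
  refine ⟨n k, qq n k, Jm n k (hpos k), evm n k, by unfold qq; omega, Jm_iso n k (hpos k),
    fun j => evm_uu n hpos j k, evm_norm n k, ?_, ?_, ?_, ?_⟩
  · exact evm_one n k
  · exact evm_add n k
  · exact evm_mul n k
  · exact evm_smul n k

end final
end QE

/-- Let `(n_k)` be a sequence of positive integers with `sup_k n_k = ∞` and let
`M = ℓ∞-⊕_k B(ℂ^{n_k})`.  Then there exist `ε > 0` and finitely many unitaries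
`u₁,…,u_t ∈ M` such that no `T ∈ M ⊗ M` (algebraic tensor product) whose image under
the multiplication map is `1` satisfies `‖uⱼ·T − T·uⱼ‖_π < ε` for all `j`.  Hence `M`
admits no approximately invariant normalized diagonal and is not approximately
amenable. -/
theorem lpInftySum_no_approx_invariant_diagonal (n : ℕ → ℕ) (hpos : ∀ k, 0 < n k)
    [∀ k, Nontrivial (EuclideanSpace ℂ (Fin (n k)))]
    (hsup : ∀ N : ℕ, ∃ k, N ≤ n k) :
    ∃ ε > (0 : ℝ), ∃ (t : ℕ) (u : Fin t → lpInftySum n),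
      (∀ j, u j ∈ unitary (lpInftySum n)) ∧
      ∀ T : lpInftySum n ⊗[ℂ] lpInftySum n, LinearMap.mul' ℂ (lpInftySum n) T = 1 →
        ¬ (∀ j, projSeminorm (actL (u j) T - actR (u j) T) < ε) := by
  refine ⟨1 / 10 ^ 11, by norm_num, 3, QE.uu n hpos, QE.uu_unitary n hpos, ?_⟩
  intro T hT
  exact (QE.good n hpos hsup).main T hT

end
end

section
/- Let M = ℓ∞-⊕_{n=1}^∞ M_n(ℂ) be the ℓ∞-direct sum of the full matrix algebras M_n(ℂ), n = 1, 2, 3, … (bounded sequences (a_n) with a_n an n×n complex matrix, with supremum of operator norms as norm and coordinatewise product). Then there exist ε > 0 and finitely many unitary elements u₁,…,u_n ∈ M such that no element T = Σᵢ aᵢ ⊗ bᵢ of the algebraic tensor product M ⊗ M with Σᵢ aᵢ bᵢ = 1 satisfies ‖uⱼ·T − T·uⱼ‖_π < ε for all j = 1,…,n; consequently ℓ∞(𝕄_n) is not approximately amenable, answering negatively the question of Ghahramani–Loy. -/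
open scoped TensorProduct ENNReal

set_option maxHeartbeats 1000000
set_option synthInstance.maxHeartbeats 1000000

noncomputable section

/-- The `ℓ∞`-direct sum `M = ℓ∞-⊕_{n=1}^∞ M_n(ℂ)` of all full matrix algebras,
realized as bounded sequences `(a_k)_{k∈ℕ}` with `a_k ∈ B(ℂ^{k+1})` (so the sizes run
through `1, 2, 3, …`), with the supremum of operator norms as norm and coordinatewise
product. -/
abbrev lpMn :=
  lp (fun k : ℕ => EuclideanSpace ℂ (Fin (k + 1)) →L[ℂ] EuclideanSpace ℂ (Fin (k + 1))) ∞


theorem vma_add2 {N : ℕ} [NeZero N] (s z : ZMod N) (hs : 8 * s.valMinAbs.natAbs < N)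
    (hz : 8 * z.valMinAbs.natAbs < N) :
    (z + 2 * s).valMinAbs = z.valMinAbs + 2 * s.valMinAbs := by
  rw [ZMod.valMinAbs_spec]
  refine ⟨by push_cast; simp, ?_⟩
  constructor <;> omega

theorem vma_sub2 {N : ℕ} [NeZero N] (s z : ZMod N) (hs : 8 * s.valMinAbs.natAbs < N)
    (hz : 8 * z.valMinAbs.natAbs < N) :
    (z - 2 * s).valMinAbs = z.valMinAbs - 2 * s.valMinAbs := by
  rw [ZMod.valMinAbs_spec]
  refine ⟨by push_cast; simp, ?_⟩
  constructor <;> omega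

open Classical in
/-- `x` if `P`, else `0`. -/
def indP (P : Prop) (x : ℝ) : ℝ := if P then x else 0

theorem indP_pos {P : Prop} (h : P) (x : ℝ) : indP P x = x := by simp [indP, h]
theorem indP_neg {P : Prop} (h : ¬ P) (x : ℝ) : indP P x = 0 := by simp [indP, h]
theorem indP_nonneg (P : Prop) {x : ℝ} (hx : 0 ≤ x) : 0 ≤ indP P x := by
  unfold indP; split_ifs <;> simp [hx]
theorem indP_le (P : Prop) {x : ℝ} (hx : 0 ≤ x) : indP P x ≤ x := by
  unfold indP; split_ifs <;> simp [hx]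

/-- Ping-pong estimate on the discrete phase space. -/
theorem phase_space {N : ℕ} [NeZero N] (f : ZMod N → ZMod N → ℝ) (hf : ∀ s z, 0 ≤ f s z)
    (h0 : f 0 0 = 0) (η η' : ℝ)
    (hT : ∑ s, ∑ z, |f s (z + 2 * s) - f s z| ≤ η)
    (hJ : ∑ s, ∑ z, |f (-z) s - f s z| ≤ η)
    (hout : ∑ s, ∑ z, indP (¬ 8 * s.valMinAbs.natAbs < N) (f s z) ≤ η') :
    ∑ s, ∑ z, f s z ≤ 100 * (η + η') := by
  have hη : 0 ≤ η := le_trans (Finset.sum_nonneg fun _ _ => Finset.sum_nonneg fun _ _ => abs_nonneg _) hT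
  have key : ∀ (g : ZMod N → ZMod N → ℝ) (P : ZMod N → ZMod N → Prop),
      (∑ s, ∑ z, |g s z - f s z| ≤ η) →
      ∑ s, ∑ z, (indP (P s z) (f s z)) ≤ ∑ s, ∑ z, (indP (P s z) (g s z)) + η := by
    intro g P hg
    have : ∑ s, ∑ z, (indP (P s z) (f s z)) ≤
        ∑ s, ∑ z, ((indP (P s z) (g s z)) + |g s z - f s z|) := by
      refine Finset.sum_le_sum fun s _ => Finset.sum_le_sum fun z _ => ?_
      unfold indP
      split_ifs
      · linarith [neg_abs_le (g s z - f s z)]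
      · simp
    simp only [Finset.sum_add_distrib] at this
    linarith
  have reT : ∀ F : ZMod N → ZMod N → ℝ, ∑ s, ∑ z, F s (z + 2 * s) = ∑ s, ∑ z, F s z := fun F =>
    Finset.sum_congr rfl fun s _ => Equiv.sum_comp (Equiv.addRight (2 * s)) (F s)
  have reJ : ∀ F : ZMod N → ZMod N → ℝ, ∑ s, ∑ z, F (-z) s = ∑ s, ∑ z, F s z := fun F => by
    rw [Finset.sum_comm]
    exact Equiv.sum_comp (Equiv.neg (ZMod N)) (fun s => ∑ z, F s z)
  have hT' : ∑ s, ∑ z, |f s (z - 2 * s) - f s z| ≤ η := by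
    rw [← reT fun s z => |f s (z - 2 * s) - f s z|]
    refine le_trans (le_of_eq ?_) hT
    refine Finset.sum_congr rfl fun s _ => Finset.sum_congr rfl fun z _ => ?_
    rw [abs_sub_comm]; simp
  set a : ZMod N → ℕ := fun s => s.valMinAbs.natAbs with ha
  have aneg : ∀ s, a (-s) = a s := fun s => ZMod.natAbs_valMinAbs_neg s
  let S : (ZMod N → ZMod N → Prop) → ℝ := fun P => ∑ s, ∑ z, (indP (P s z) (f s z))
  have out1 : S (fun s z => ¬ 8 * a s < N) ≤ η' := hout
  have out2 : S (fun s z => ¬ 8 * a z < N) ≤ η' + η := by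
    refine (key (fun s z => f (-z) s) _ hJ).trans ?_
    have := reJ (fun s z => indP (¬ 8 * a s < N) (f s z))
    simp only [aneg] at this
    linarith [out1]
  have hBA : S (fun s z => a s < a z) ≤ S (fun s z => a z < a s) + η := by
    refine (key (fun s z => f (-z) s) _ hJ).trans ?_
    have := reJ (fun s z => indP (a z < a s) (f s z))
    simp only [aneg] at this
    linarith
  let inb : ZMod N → ZMod N → Prop := fun s z => 8 * a s < N ∧ 8 * a z < N
  have hAA : S (fun s z => a z < a s) ≤ S (fun s z => inb s z ∧ a z < a s) + η' + (η' + η) := by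
    have : S (fun s z => a z < a s) ≤ S (fun s z => inb s z ∧ a z < a s) +
      S (fun s z => ¬ 8 * a s < N) + S (fun s z => ¬ 8 * a z < N) := by
      simp only [S, ← Finset.sum_add_distrib]
      refine Finset.sum_le_sum fun s _ => Finset.sum_le_sum fun z _ => ?_
      have := hf s z
      unfold indP
      by_cases h1 : 8 * a s < N <;> by_cases h2 : 8 * a z < N <;> by_cases h3 : a z < a s <;>
        simp [inb, h1, h2, h3] <;> linarith
    linarith
  have hpp : S (fun s z => inb s z ∧ a z < a s) + S (fun s z => inb s z ∧ a z < a s) ≤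
      S (fun s z => a s < a z) + η + η := by
    have e1 := key _ (fun s z => inb s z ∧ a z < a s) hT
    have e2 := key _ (fun s z => inb s z ∧ a z < a s) hT'
    have r1 := reT (fun s z => indP (inb s (z - 2 * s) ∧ a (z - 2 * s) < a s) (f s z))
    have r2 := reT (fun s z => indP (inb s z ∧ a z < a s) (f s (z - 2 * s)))
    simp only [add_sub_cancel_right] at r1 r2
    have : ∑ s, ∑ z, (indP (inb s (z - 2 * s) ∧ a (z - 2 * s) < a s) (f s z)) +
        ∑ s, ∑ z, (indP (inb s (z + 2 * s) ∧ a (z + 2 * s) < a s) (f s z)) ≤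
        S (fun s z => a s < a z) := by
      simp only [S, ← Finset.sum_add_distrib]
      refine Finset.sum_le_sum fun s _ => Finset.sum_le_sum fun z _ => ?_
      have := hf s z
      by_cases h1 : inb s (z - 2 * s) ∧ a (z - 2 * s) < a s
      · obtain ⟨⟨h1, h2⟩, h3⟩ := h1
        have q := vma_add2 s (z - 2 * s) h1 h2
        rw [sub_add_cancel] at q
        by_cases h1' : inb s (z + 2 * s) ∧ a (z + 2 * s) < a s
        · obtain ⟨⟨h1', h2'⟩, h3'⟩ := h1'
          have q' := vma_sub2 s (z + 2 * s) h1' h2'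
          rw [add_sub_cancel_right] at q'
          simp only [ha] at *
          omega
        · have : a s < a z := by simp only [ha] at *; omega
          rw [indP_pos ⟨⟨h1, h2⟩, h3⟩, indP_neg h1', indP_pos this]; linarith
      · by_cases h1' : inb s (z + 2 * s) ∧ a (z + 2 * s) < a s
        · rw [indP_neg h1, indP_pos h1']
          obtain ⟨⟨h1', h2'⟩, h3'⟩ := h1'
          have q' := vma_sub2 s (z + 2 * s) h1' h2'
          rw [add_sub_cancel_right] at q'
          have : a s < a z := by simp only [ha] at *; omega
          rw [indP_pos this]; linarith
        · rw [indP_neg h1, indP_neg h1']; linarith [indP_nonneg (a s < a z) this]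
    simp only [S] at this e1 e2 ⊢
    linarith
  have hC1 : S (fun s z => inb s z ∧ s ≠ 0 ∧ s.valMinAbs = z.valMinAbs) ≤ S (fun s z => a s < a z) + η := by
    have e1 := key _ (fun s z => inb s z ∧ s ≠ 0 ∧ s.valMinAbs = z.valMinAbs) hT
    have r2 := reT (fun s z => indP (a s < a z) (f s z))
    refine e1.trans ?_
    simp only [S]
    rw [← r2]
    gcongr with s _ z _
    have hn := hf s (z + 2 * s)
    by_cases h1 : inb s z ∧ s ≠ 0 ∧ s.valMinAbs = z.valMinAbs
    · have q := vma_add2 s z h1.1.1 h1.1.2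
      have := h1.2.2
      have := (ZMod.valMinAbs_eq_zero s).not.2 h1.2.1
      have h2 : a s < a (z + 2 * s) := by simp only [ha] at *; omega
      rw [indP_pos h1, indP_pos h2]
    · rw [indP_neg h1]; exact indP_nonneg _ hn
  have hC2 : S (fun s z => inb s z ∧ s ≠ 0 ∧ s.valMinAbs = -z.valMinAbs) ≤ S (fun s z => a s < a z) + η := by
    have e1 := key _ (fun s z => inb s z ∧ s ≠ 0 ∧ s.valMinAbs = -z.valMinAbs) hT'
    have r2 := reT (fun s z => indP (a s < a (z - 2 * s)) (f s (z - 2 * s)))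
    simp only [add_sub_cancel_right] at r2
    refine e1.trans ?_
    simp only [S]
    rw [r2]
    gcongr with s _ z _
    have hn := hf s (z - 2 * s)
    by_cases h1 : inb s z ∧ s ≠ 0 ∧ s.valMinAbs = -z.valMinAbs
    · have q := vma_sub2 s z h1.1.1 h1.1.2
      have := h1.2.2
      have := (ZMod.valMinAbs_eq_zero s).not.2 h1.2.1
      have h2 : a s < a (z - 2 * s) := by simp only [ha] at *; omega
      rw [indP_pos h1, indP_pos h2]
    · rw [indP_neg h1]; exact indP_nonneg _ hn
  have htot : ∑ s, ∑ z, f s z ≤ S (fun s z => a z < a s) + S (fun s z => a s < a z) +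
      S (fun s z => inb s z ∧ s ≠ 0 ∧ s.valMinAbs = z.valMinAbs) +
      S (fun s z => inb s z ∧ s ≠ 0 ∧ s.valMinAbs = -z.valMinAbs) +
      S (fun s z => ¬ 8 * a s < N) + S (fun s z => ¬ 8 * a z < N) := by
    simp only [S, ← Finset.sum_add_distrib]
    refine Finset.sum_le_sum fun s _ => Finset.sum_le_sum fun z _ => ?_
    have := hf s z
    have nn : ∀ (P : Prop), 0 ≤ (indP P (f s z)) := fun P => indP_nonneg P this
    have n1 := nn (a z < a s)
    have n2 := nn (a s < a z)
    have n3 := nn (inb s z ∧ s ≠ 0 ∧ s.valMinAbs = z.valMinAbs)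
    have n4 := nn (inb s z ∧ s ≠ 0 ∧ s.valMinAbs = -z.valMinAbs)
    have n5 := nn (¬ 8 * a s < N)
    have n6 := nn (¬ 8 * a z < N)
    by_cases c1 : a z < a s
    · linarith [indP_pos c1 (f s z)]
    by_cases c2 : a s < a z
    · linarith [indP_pos c2 (f s z)]
    by_cases c5 : ¬ 8 * a s < N
    · linarith [indP_pos c5 (f s z)]
    by_cases c6 : ¬ 8 * a z < N
    · linarith [indP_pos c6 (f s z)]
    rw [not_not] at c5 c6
    by_cases c0 : s = 0
    · have hz : z = 0 := by
        rw [← ZMod.valMinAbs_eq_zero]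
        have : s.valMinAbs = 0 := (ZMod.valMinAbs_eq_zero s).2 c0
        simp only [ha] at c1 c2
        omega
      have : f s z = 0 := by rw [c0, hz, h0]
      linarith
    have : s.valMinAbs = z.valMinAbs ∨ s.valMinAbs = -z.valMinAbs := by
      simp only [ha] at *; omega
    rcases this with h | h
    · linarith [indP_pos (⟨⟨c5, c6⟩, c0, h⟩ : inb s z ∧ s ≠ 0 ∧ s.valMinAbs = z.valMinAbs) (f s z)]
    · linarith [indP_pos (⟨⟨c5, c6⟩, c0, h⟩ : inb s z ∧ s ≠ 0 ∧ s.valMinAbs = -z.valMinAbs) (f s z)]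
  have hη' : 0 ≤ η' := le_trans (Finset.sum_nonneg fun s _ => Finset.sum_nonneg fun z _ =>
    indP_nonneg _ (hf s z)) hout
  linarith
section
open Matrix ComplexConjugate
/-- squared Hilbert-Schmidt norm -/
def hsq {ι : Type*} [Fintype ι] (x : Matrix ι ι ℂ) : ℝ := ∑ i, ∑ j, ‖x i j‖ ^ 2

/-- standard character -/
def ech {N : ℕ} [NeZero N] (a : ZMod N) : ℂ := ZMod.stdAddChar a

section
variable {N : ℕ} [NeZero N]

theorem ech_add (a b : ZMod N) : ech (a + b) = ech a * ech b := AddChar.map_add_eq_mul _ _ _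
theorem ech_zero : ech (0 : ZMod N) = 1 := AddChar.map_zero_eq_one _
theorem ech_norm (a : ZMod N) : ‖ech a‖ = 1 := by
  rw [ech, ZMod.stdAddChar_apply]; exact Circle.norm_coe _
theorem ech_conj (a : ZMod N) : conj (ech a) = ech (-a) := by
  rw [ech, ech, AddChar.map_neg_eq_conj]
theorem ech_sum (a : ZMod N) : ∑ b, ech (b * a) = if a = 0 then (N : ℂ) else 0 := by
  have := AddChar.sum_mulShift a (ZMod.isPrimitive_stdAddChar N)
  simpa [ech, ZMod.card] using this

theorem ech_far (s : ZMod N) (h : ¬ 8 * s.valMinAbs.natAbs < N) : 1 / 2 ≤ ‖ech s - 1‖ ^ 2 := by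
  have hN : (0 : ℝ) < N := by exact_mod_cast Nat.pos_of_ne_zero (NeZero.ne N)
  set m := s.valMinAbs with hm
  have e : ech s = Complex.exp ((2 * Real.pi * m / N : ℝ) * Complex.I) := by
    have : ((m : ℤ) : ZMod N) = s := ZMod.coe_valMinAbs s
    rw [← this, ech, ZMod.stdAddChar_coe]
    congr 1; push_cast; ring
  have h2 : m.natAbs ≤ N / 2 := ZMod.natAbs_valMinAbs_le s
  set θ : ℝ := 2 * Real.pi * m / N with hθ
  have hab : |(m : ℝ)| = (m.natAbs : ℝ) := by rw [Nat.cast_natAbs]; simp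
  have hθabs : |θ| = 2 * Real.pi * m.natAbs / N := by
    rw [hθ, abs_div, abs_mul, hab, abs_of_pos hN, abs_of_pos (by positivity)]
  have h1 : (N : ℝ) ≤ 8 * m.natAbs := by exact_mod_cast not_lt.1 h
  have h2' : 2 * (m.natAbs : ℝ) ≤ N := by exact_mod_cast (by omega : 2 * m.natAbs ≤ N)
  have l1 : Real.pi / 4 ≤ |θ| := by
    rw [hθabs, le_div_iff₀ hN]; nlinarith [Real.pi_pos]
  have l2 : |θ| ≤ Real.pi := by
    rw [hθabs, div_le_iff₀ hN]; nlinarith [Real.pi_pos]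
  have hc : Real.cos θ ≤ Real.sqrt 2 / 2 := by
    rw [← Real.cos_abs, ← Real.cos_pi_div_four]
    exact Real.cos_le_cos_of_nonneg_of_le_pi (by positivity) l2 l1
  have : ‖ech s - 1‖ ^ 2 = 2 - 2 * Real.cos θ := by
    rw [e, Complex.sq_norm, Complex.normSq_apply]
    simp only [Complex.sub_re, Complex.sub_im, Complex.exp_ofReal_mul_I_re, Complex.exp_ofReal_mul_I_im, Complex.one_re, Complex.one_im]
    nlinarith [Real.sin_sq_add_cos_sq θ]
  have s2 : Real.sqrt 2 < 1.5 := by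
    rw [Real.sqrt_lt' (by norm_num)]; norm_num
  rw [this]; linarith

/-- Weyl coefficient. -/
def wc (x : Matrix (ZMod N) (ZMod N) ℂ) (s z : ZMod N) : ℂ := ∑ b, ech (z * b) * x b (b + s)

theorem wc_sub (x y : Matrix (ZMod N) (ZMod N) ℂ) (s z : ZMod N) :
    wc (x - y) s z = wc x s z - wc y s z := by
  simp [wc, mul_sub]

theorem parseval1 (a : ZMod N → ℂ) : ∑ z, ‖∑ b, ech (z * b) * a b‖ ^ 2 = N * ∑ b, ‖a b‖ ^ 2 := by
  have : ((∑ z, ‖∑ b, ech (z * b) * a b‖ ^ 2 : ℝ) : ℂ) = ((N * ∑ b, ‖a b‖ ^ 2 : ℝ) : ℂ) := by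
    push_cast
    simp_rw [← Complex.mul_conj', map_sum, Finset.sum_mul_sum]
    rw [Finset.sum_comm]
    rw [Finset.mul_sum]
    refine Finset.sum_congr rfl fun b _ => ?_
    rw [Finset.sum_comm]
    have : ∀ c, ∑ z, ech (z * b) * a b * conj (ech (z * c) * a c) =
        (if b - c = 0 then (N : ℂ) else 0) * (a b * conj (a c)) := fun c => by
      rw [← ech_sum, Finset.sum_mul]
      refine Finset.sum_congr rfl fun z _ => ?_
      rw [map_mul, ech_conj, show z * (b - c) = z * b + -(z * c) by ring, ech_add]
      ring
    simp_rw [this, sub_eq_zero]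
    simp
  exact_mod_cast this

theorem parseval (x : Matrix (ZMod N) (ZMod N) ℂ) : ∑ s, ∑ z, ‖wc x s z‖ ^ 2 = N * hsq x := by
  simp_rw [wc, parseval1, ← Finset.mul_sum, hsq]
  rw [Finset.sum_comm]
  congr 1
  refine Finset.sum_congr rfl fun b _ => ?_
  exact Equiv.sum_comp (Equiv.addLeft b) (fun c => ‖x b c‖ ^ 2)

theorem wc_zero (x : Matrix (ZMod N) (ZMod N) ℂ) : wc x 0 0 = x.trace := by
  simp [wc, ech_zero, Matrix.trace]

/-- clock -/
def mZ : Matrix (ZMod N) (ZMod N) ℂ := diagonal fun a => ech a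
/-- quadratic phase -/
def mD : Matrix (ZMod N) (ZMod N) ℂ := diagonal fun a => ech (a * a)
/-- Fourier -/
def mF : Matrix (ZMod N) (ZMod N) ℂ := fun a b => ((Real.sqrt N : ℝ) : ℂ)⁻¹ * ech (a * b)

theorem mZ_unit : (mZ : Matrix (ZMod N) (ZMod N) ℂ) ∈ unitaryGroup (ZMod N) ℂ := by
  rw [mem_unitaryGroup_iff, mZ, star_eq_conjTranspose, diagonal_conjTranspose, diagonal_mul_diagonal, ← diagonal_one]
  congr 1; ext a
  simp [← ech_add, ech_conj, ech_zero]

theorem mD_unit : (mD : Matrix (ZMod N) (ZMod N) ℂ) ∈ unitaryGroup (ZMod N) ℂ := by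
  rw [mem_unitaryGroup_iff, mD, star_eq_conjTranspose, diagonal_conjTranspose, diagonal_mul_diagonal, ← diagonal_one]
  congr 1; ext a
  simp [← ech_add, ech_conj, ech_zero]

theorem sqrtN : (((Real.sqrt N : ℝ) : ℂ)⁻¹ * ((Real.sqrt N : ℝ) : ℂ)⁻¹) = (N : ℂ)⁻¹ := by
  rw [← mul_inv, ← Complex.ofReal_mul, Real.mul_self_sqrt (by positivity)]; simp

theorem N_ne : (N : ℂ) ≠ 0 := by exact_mod_cast NeZero.ne N

theorem mF_unit : (mF : Matrix (ZMod N) (ZMod N) ℂ) ∈ unitaryGroup (ZMod N) ℂ := by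
  rw [mem_unitaryGroup_iff, star_eq_conjTranspose]
  ext a c
  rw [mul_apply]
  simp only [mF, conjTranspose_apply, star_mul', RCLike.star_def, ech_conj, map_inv₀, Complex.conj_ofReal]
  have : ∀ b, ((Real.sqrt N : ℝ) : ℂ)⁻¹ * ech (a * b) * (((Real.sqrt N : ℝ) : ℂ)⁻¹ * ech (-(c * b))) =
      (N : ℂ)⁻¹ * ech (b * (a - c)) := fun b => by
    rw [← sqrtN, show b * (a - c) = a * b + -(c * b) by ring, ech_add]; ring
  simp_rw [this, ← Finset.mul_sum, ech_sum, sub_eq_zero, one_apply]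
  split_ifs
  · exact inv_mul_cancel₀ N_ne
  · simp

theorem wc_Z (x : Matrix (ZMod N) (ZMod N) ℂ) (s z : ZMod N) :
    wc (mZᴴ * x * mZ) s z = ech s * wc x s z := by
  simp only [wc, mZ, diagonal_conjTranspose, mul_diagonal, diagonal_mul, Finset.mul_sum]
  refine Finset.sum_congr rfl fun b _ => ?_
  have h : ech b * ech (-b) = 1 := by rw [← ech_add]; simp [ech_zero]
  simp only [Pi.star_apply, RCLike.star_def, ech_conj, ech_add b s]
  linear_combination (ech (z * b) * ech s * x b (b + s)) * h

theorem wc_D (x : Matrix (ZMod N) (ZMod N) ℂ) (s z : ZMod N) :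
    wc (mDᴴ * x * mD) s z = ech (s * s) * wc x s (z + 2 * s) := by
  simp only [wc, mD, diagonal_conjTranspose, mul_diagonal, diagonal_mul, Finset.mul_sum]
  refine Finset.sum_congr rfl fun b _ => ?_
  have h : ech (z * b) * ech (-(b * b)) * ech ((b + s) * (b + s)) = ech (s * s) * ech ((z + 2 * s) * b) := by
    rw [← ech_add, ← ech_add, ← ech_add]; congr 1; ring
  simp only [Pi.star_apply, RCLike.star_def, ech_conj]
  linear_combination (x b (b + s)) * h

theorem wc_F (x : Matrix (ZMod N) (ZMod N) ℂ) (s z : ZMod N) :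
    wc (mFᴴ * x * mF) s z = ech (-(z * s)) * wc x (-z) s := by
  have h1 : wc (mFᴴ * x * mF) s z = ∑ b, ∑ q, ∑ p, (N : ℂ)⁻¹ * ech (b * (z - p + q)) * (x p q * ech (q * s)) := by
    simp only [wc, mul_apply, Finset.mul_sum, Finset.sum_mul, mF, conjTranspose_apply, star_mul', RCLike.star_def, ech_conj, map_inv₀, Complex.conj_ofReal]
    refine Finset.sum_congr rfl fun b _ => Finset.sum_congr rfl fun q _ => Finset.sum_congr rfl fun p _ => ?_
    rw [← sqrtN, show b * (z - p + q) = z * b + -(p * b) + q * b by ring, ech_add, ech_add, show q * (b + s) = q * b + q * s by ring, ech_add]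
    ring
  have h2 : wc (mFᴴ * x * mF) s z = ∑ q, x (q + z) q * ech (q * s) := by
    rw [h1, Finset.sum_comm]
    refine Finset.sum_congr rfl fun q _ => ?_
    rw [Finset.sum_comm]
    simp_rw [← Finset.sum_mul, ← Finset.mul_sum, ech_sum]
    rw [Finset.sum_eq_single (q + z)]
    · simp
    · intro p _ hp
      rw [if_neg]; · simp
      intro h; apply hp; linear_combination -h
    · simp
  rw [h2, wc, Finset.mul_sum, ← Equiv.sum_comp (Equiv.subRight z)]
  refine Finset.sum_congr rfl fun b _ => ?_
  simp only [Equiv.subRight_apply, sub_add_cancel]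
  rw [← sub_eq_add_neg, show (b - z) * s = -(z * s) + s * b by ring, ech_add]
  ring
end

section
variable {ι : Type*} [Fintype ι] [DecidableEq ι]

theorem hsq_eq (x : Matrix ι ι ℂ) : ((hsq x : ℝ) : ℂ) = (xᴴ * x).trace := by
  simp only [hsq, Matrix.trace, diag_apply, mul_apply, conjTranspose_apply, RCLike.star_def]
  push_cast
  rw [Finset.sum_comm]
  refine Finset.sum_congr rfl fun i _ => Finset.sum_congr rfl fun j _ => ?_
  rw [Complex.conj_mul']

theorem hsq_eq_re (x : Matrix ι ι ℂ) : hsq x = (xᴴ * x).trace.re := by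
  rw [← hsq_eq]; simp

theorem hsq_nonneg (x : Matrix ι ι ℂ) : 0 ≤ hsq x := by unfold hsq; positivity

theorem hsq_unit_mul {U : Matrix ι ι ℂ} (hU : Uᴴ * U = 1) (x : Matrix ι ι ℂ) :
    hsq (U * x) = hsq x := by
  rw [hsq_eq_re, hsq_eq_re, conjTranspose_mul, Matrix.mul_assoc, ← Matrix.mul_assoc Uᴴ, hU, Matrix.one_mul]

theorem hsq_mul_unit {U : Matrix ι ι ℂ} (hU : U * Uᴴ = 1) (x : Matrix ι ι ℂ) :
    hsq (x * U) = hsq x := by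
  rw [hsq_eq_re, hsq_eq_re, conjTranspose_mul, trace_mul_comm, Matrix.mul_assoc, ← Matrix.mul_assoc U, hU, Matrix.one_mul, trace_mul_comm]

theorem hsq_cs (x y : Matrix ι ι ℂ) : ‖(x * y).trace‖ ^ 2 ≤ hsq x * hsq y := by
  have h1 : ‖(x * y).trace‖ ≤ ∑ p : ι × ι, ‖x p.1 p.2‖ * ‖y p.2 p.1‖ := by
    rw [Fintype.sum_prod_type]
    simp only [Matrix.trace, diag_apply, mul_apply]
    refine (norm_sum_le _ _).trans (Finset.sum_le_sum fun i _ => (norm_sum_le _ _).trans (Finset.sum_le_sum fun j _ => ?_))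
    rw [norm_mul]
  calc _ ≤ (∑ p : ι × ι, ‖x p.1 p.2‖ * ‖y p.2 p.1‖) ^ 2 := by gcongr
    _ ≤ (∑ p : ι × ι, ‖x p.1 p.2‖ ^ 2) * (∑ p : ι × ι, ‖y p.2 p.1‖ ^ 2) := Finset.sum_mul_sq_le_sq_mul_sq _ _ _
    _ = _ := by
      rw [Fintype.sum_prod_type, Fintype.sum_prod_type]
      congr 1
      rw [Finset.sum_comm]; rfl

theorem hsq_comm {U : Matrix ι ι ℂ} (hU : U ∈ unitaryGroup ι ℂ) (x : Matrix ι ι ℂ) :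
    hsq (x - Uᴴ * x * U) = hsq (U * x - x * U) := by
  have h1 := mem_unitaryGroup_iff.1 hU
  have h2 := mem_unitaryGroup_iff'.1 hU
  rw [star_eq_conjTranspose] at h1 h2
  rw [← hsq_unit_mul h2, Matrix.mul_sub, Matrix.mul_assoc, ← Matrix.mul_assoc U, h1, Matrix.one_mul]
end

section
variable {N : ℕ} [NeZero N]

theorem gap_eta (x y : Matrix (ZMod N) (ZMod N) ℂ) (σ : ZMod N × ZMod N ≃ ZMod N × ZMod N)
    (hσ : ∀ p, ‖wc y p.1 p.2‖ = ‖wc x (σ p).1 (σ p).2‖) (h0 : σ 0 = 0)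
    (f : ZMod N × ZMod N → ℝ) (hf : ∀ p, f p = if p = 0 then 0 else ‖wc x p.1 p.2‖ ^ 2) :
    ∑ p, |f (σ p) - f p| ≤ 400 * (N * hsq (x - y)) + (∑ p, f p) / 400 := by
  have hpt : ∀ p, |f (σ p) - f p| ≤ 400 * ‖wc (x - y) p.1 p.2‖ ^ 2 + (f (σ p) + f p) / 800 := by
    intro p
    by_cases hp : p = 0
    · subst hp
      rw [h0, hf]; simp
    · have : σ p ≠ 0 := fun h => hp (σ.injective (h.trans h0.symm))
      rw [hf, hf, if_neg hp, if_neg this, ← hσ, wc_sub]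
      set u := wc x p.1 p.2
      set v := wc y p.1 p.2
      have h1 : |‖u‖ - ‖v‖| ≤ ‖u - v‖ := abs_norm_sub_norm_le u v
      have h2 : ‖v‖ ^ 2 - ‖u‖ ^ 2 = (‖v‖ - ‖u‖) * (‖v‖ + ‖u‖) := by ring
      have h3 : (0:ℝ) ≤ ‖v‖ + ‖u‖ := by positivity
      rw [h2, abs_mul, abs_of_nonneg h3, abs_sub_comm]
      have h4 : |‖u‖ - ‖v‖| * (‖v‖ + ‖u‖) ≤ ‖u - v‖ * (‖v‖ + ‖u‖) := by gcongr
      nlinarith [sq_nonneg (40 * ‖u - v‖ - (‖v‖ + ‖u‖) / 40), sq_nonneg (‖v‖ - ‖u‖), sq_nonneg (800 * ‖u - v‖ - (‖v‖ + ‖u‖))]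
  have hs := Finset.sum_le_sum (fun p (_ : p ∈ Finset.univ) => hpt p)
  rw [Finset.sum_add_distrib, ← Finset.mul_sum, ← Finset.sum_div, Finset.sum_add_distrib, Equiv.sum_comp σ f,
    Fintype.sum_prod_type (f := fun p => ‖wc (x - y) p.1 p.2‖ ^ 2), parseval] at hs
  linarith

theorem gap (x : Matrix (ZMod N) (ZMod N) ℂ) :
    N * hsq x - ‖x.trace‖ ^ 2 ≤ 100000 * (N * (hsq (mZ * x - x * mZ) + hsq (mD * x - x * mD) + hsq (mF * x - x * mF))) := by
  rw [← hsq_comm mZ_unit, ← hsq_comm mD_unit, ← hsq_comm mF_unit]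
  let f : ZMod N × ZMod N → ℝ := fun p => if p = 0 then 0 else ‖wc x p.1 p.2‖ ^ 2
  have hfn : ∀ p, 0 ≤ f p := fun p => by simp only [f]; split_ifs <;> positivity
  have hM : ∑ p, f p = N * hsq x - ‖x.trace‖ ^ 2 := by
    rw [← parseval, ← Fintype.sum_prod_type (f := fun p => ‖wc x p.1 p.2‖ ^ 2), ← wc_zero]
    have he := Finset.sum_erase_eq_sub (f := fun p : ZMod N × ZMod N => ‖wc x p.1 p.2‖ ^ 2)
      (Finset.mem_univ (0 : ZMod N × ZMod N))
    change _ = _ - ‖wc x (0 : ZMod N × ZMod N).1 (0 : ZMod N × ZMod N).2‖ ^ 2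
    rw [← he]
    rw [← Finset.sum_erase Finset.univ (a := (0 : ZMod N × ZMod N)) (f := f) (by simp [f])]
    refine Finset.sum_congr rfl fun p hp => ?_
    simp [f, (Finset.mem_erase.1 hp).1]
  let σT : ZMod N × ZMod N ≃ ZMod N × ZMod N :=
    ⟨fun p => (p.1, p.2 + 2 * p.1), fun p => (p.1, p.2 - 2 * p.1), fun p => by simp, fun p => by simp⟩
  let σJ : ZMod N × ZMod N ≃ ZMod N × ZMod N :=
    ⟨fun p => (-p.2, p.1), fun p => (p.2, -p.1), fun p => by simp, fun p => by simp⟩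
  have e1 := gap_eta x (mDᴴ * x * mD) σT (fun p => by rw [wc_D, norm_mul, ech_norm, one_mul]; rfl)
    (by simp [σT]) f (fun p => rfl)
  have e2 := gap_eta x (mFᴴ * x * mF) σJ (fun p => by rw [wc_F, norm_mul, ech_norm, one_mul]; rfl)
    (by simp [σJ]) f (fun p => rfl)
  have e3 : ∑ s, ∑ z, indP (¬ 8 * s.valMinAbs.natAbs < N) (f (s, z)) ≤ 2 * (N * hsq (x - mZᴴ * x * mZ)) := by
    rw [← parseval, Finset.mul_sum]
    refine Finset.sum_le_sum fun s _ => ?_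
    rw [Finset.mul_sum]
    refine Finset.sum_le_sum fun z _ => ?_
    by_cases h : ¬ 8 * s.valMinAbs.natAbs < N
    · rw [indP_pos h, wc_sub, wc_Z, show wc x s z - ech s * wc x s z = -((ech s - 1) * wc x s z) by ring, norm_neg, norm_mul, mul_pow]
      have := ech_far s h
      have h2 : f (s, z) ≤ ‖wc x s z‖ ^ 2 := by simp only [f]; split_ifs <;> simp
      nlinarith [sq_nonneg ‖wc x s z‖]
    · rw [indP_neg h]; positivity
  have hz := hsq_nonneg (x - mZᴴ * x * mZ)
  have hd := hsq_nonneg (x - mDᴴ * x * mD)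
  have hF := hsq_nonneg (x - mFᴴ * x * mF)
  have nz : (0 : ℝ) ≤ N := by positivity
  have pz := mul_nonneg nz hz
  have pd := mul_nonneg nz hd
  have pF := mul_nonneg nz hF
  have := phase_space (fun s z => f (s, z)) (fun s z => hfn _) (by simp [f])
    (400 * (N * hsq (x - mDᴴ * x * mD)) + 400 * (N * hsq (x - mFᴴ * x * mF)) + (∑ p, f p) / 400) _
    (by rw [← Fintype.sum_prod_type (f := fun p => |f (p.1, p.2 + 2 * p.1) - f (p.1, p.2)|)]
        refine e1.trans ?_; linarith)
    (by rw [← Fintype.sum_prod_type (f := fun p => |f (-p.2, p.1) - f (p.1, p.2)|)]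
        refine e2.trans ?_; linarith) e3
  rw [← Fintype.sum_prod_type (f := fun p => f (p.1, p.2))] at this
  simp only [Prod.mk.eta] at this
  rw [← hM]
  linarith
end

section
open scoped ComplexOrder
variable {ι : Type*} [Fintype ι] [DecidableEq ι]

/-- `V diag(d) V*`. -/
def dg (V : Matrix ι ι ℂ) (d : ι → ℝ) : Matrix ι ι ℂ := V * diagonal (fun i => (d i : ℂ)) * Vᴴ

theorem dg_mul {V : Matrix ι ι ℂ} (hV : Vᴴ * V = 1) (a b : ι → ℝ) :
    dg V a * dg V b = dg V (fun i => a i * b i) := by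
  unfold dg
  calc _ = V * diagonal (fun i => (a i : ℂ)) * (Vᴴ * V) * diagonal (fun i => (b i : ℂ)) * Vᴴ := by
        simp only [Matrix.mul_assoc]
    _ = _ := by
        rw [hV, Matrix.mul_one, Matrix.mul_assoc V, diagonal_mul_diagonal]
        simp

theorem dg_one {V : Matrix ι ι ℂ} (hV : V * Vᴴ = 1) : dg V (fun _ => 1) = 1 := by
  simp [dg, hV]

theorem dg_herm (V : Matrix ι ι ℂ) (a : ι → ℝ) : (dg V a)ᴴ = dg V a := by
  simp only [dg, conjTranspose_mul, conjTranspose_conjTranspose, diagonal_conjTranspose, Matrix.mul_assoc]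
  congr 3
  ext i
  simp

theorem dg_trace {V : Matrix ι ι ℂ} (hV : Vᴴ * V = 1) (a : ι → ℝ) :
    (dg V a).trace = ((∑ i, a i : ℝ) : ℂ) := by
  rw [dg, trace_mul_comm, ← Matrix.mul_assoc, hV, Matrix.one_mul]
  simp [trace]

theorem dg_hsq {V : Matrix ι ι ℂ} (hV : Vᴴ * V = 1) (a : ι → ℝ) :
    hsq (dg V a) = ∑ i, a i * a i := by
  rw [hsq_eq_re, dg_herm, dg_mul hV, dg_trace hV, Complex.ofReal_re]

theorem dg_psd (V : Matrix ι ι ℂ) {a : ι → ℝ} (ha : ∀ i, 0 ≤ a i) : (dg V a).PosSemidef := by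
  refine PosSemidef.mul_mul_conjTranspose_same ?_ V
  exact PosSemidef.diagonal (fun i => by simpa using ha i)

theorem herm_dg {H : Matrix ι ι ℂ} (hH : H.IsHermitian) :
    ∃ (V : Matrix ι ι ℂ) (d : ι → ℝ), Vᴴ * V = 1 ∧ V * Vᴴ = 1 ∧ H = dg V d ∧
      H.rank = Fintype.card {i // d i ≠ 0} := by
  refine ⟨hH.eigenvectorUnitary, hH.eigenvalues, ?_, ?_, ?_, hH.rank_eq_card_non_zero_eigs⟩
  · exact Unitary.coe_star_mul_self hH.eigenvectorUnitary
  · exact Unitary.coe_mul_star_self hH.eigenvectorUnitary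
  · exact hH.spectral_theorem

theorem polar_herm {H : Matrix ι ι ℂ} (hH : H.IsHermitian) :
    ∃ v h : Matrix ι ι ℂ, vᴴ = v ∧ v * v = 1 ∧ h.PosSemidef ∧ H = v * (h * h) ∧
      ‖h.trace‖ ^ 2 ≤ H.rank * hsq h ∧ ‖H.trace‖ ≤ hsq h := by
  obtain ⟨V, d, h1, h2, h3, h4⟩ := herm_dg hH
  refine ⟨dg V (fun i => if d i < 0 then -1 else 1), dg V (fun i => √|d i|), dg_herm _ _, ?_,
    dg_psd _ (fun i => Real.sqrt_nonneg _), ?_, ?_, ?_⟩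
  · rw [dg_mul h1, ← dg_one h2]
    congr 1; ext i; split_ifs <;> norm_num
  · rw [dg_mul h1, dg_mul h1, h3]
    congr 1; ext i
    rw [Real.mul_self_sqrt (abs_nonneg _)]
    split_ifs with h
    · rw [abs_of_neg h]; ring
    · rw [abs_of_nonneg (not_lt.1 h)]; ring
  · rw [dg_hsq h1, dg_trace h1, Complex.norm_real, Real.norm_eq_abs, sq_abs, h4, Fintype.card_subtype]
    have := Finset.sum_mul_sq_le_sq_mul_sq Finset.univ (fun i => if d i ≠ 0 then (1:ℝ) else 0) (fun i => √|d i|)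
    refine le_trans (le_of_eq ?_) (this.trans (le_of_eq ?_))
    · congr 1
      refine Finset.sum_congr rfl fun i _ => ?_
      split_ifs with h
      · simp
      · simp only [ne_eq, not_not] at h; simp [h]
    · congr 1
      · simp [Finset.sum_ite]
      · simp only [pow_two]
  · rw [dg_hsq h1, h3, dg_trace h1, Complex.norm_real, Real.norm_eq_abs]
    refine (Finset.abs_sum_le_sum_abs _ _).trans (le_of_eq ?_)
    refine Finset.sum_congr rfl fun i _ => ?_
    rw [Real.mul_self_sqrt (abs_nonneg _)]

theorem powers_stormer {h k : Matrix ι ι ℂ} (hh : h.PosSemidef) (hk : k.PosSemidef) :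
    ∃ Y : Matrix ι ι ℂ, Yᴴ * Y = 1 ∧ Y * Yᴴ = 1 ∧ hsq (h - k) ≤ (Y * (h * h - k * k)).trace.re := by
  obtain ⟨V, d, h1, h2, h3, -⟩ := herm_dg (hh.isHermitian.sub hk.isHermitian)
  have hY : ∀ i, (if d i < 0 then (-1:ℝ) else 1) * (if d i < 0 then -1 else 1) = 1 := by
    intro i; split_ifs <;> norm_num
  have hYY : dg V (fun i => if d i < 0 then -1 else 1) * dg V (fun i => if d i < 0 then -1 else 1) = 1 := by
    rw [dg_mul h1]; simp only [hY]; exact dg_one h2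
  refine ⟨dg V (fun i => if d i < 0 then -1 else 1), by rw [dg_herm]; exact hYY,
    by rw [dg_herm]; exact hYY, ?_⟩
  have ph := hh.conjTranspose_mul_mul_same V
  have pk := hk.conjTranspose_mul_mul_same V
  set h' := Vᴴ * h * V with hh'
  set k' := Vᴴ * k * V with hk'
  set Λ := diagonal (fun i => (d i : ℂ)) with hΛ
  have hd : h' - k' = Λ := by
    rw [hh', hk', ← Matrix.sub_mul, ← Matrix.mul_sub, h3, dg]
    calc _ = (Vᴴ * V) * Λ * (Vᴴ * V) := by simp only [hΛ, Matrix.mul_assoc]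
      _ = _ := by rw [h1]; simp
  have e1 : Vᴴ * (h * h - k * k) * V = h' * Λ + Λ * k' := by
    rw [← hd]
    have : h' * (h' - k') + (h' - k') * k' = h' * h' - k' * k' := by noncomm_ring
    rw [this, hh', hk']
    have e : ∀ g : Matrix ι ι ℂ, Vᴴ * g * V * (Vᴴ * g * V) = Vᴴ * (g * g) * V := by
      intro g
      calc _ = Vᴴ * g * (V * Vᴴ) * g * V := by simp only [Matrix.mul_assoc]
        _ = _ := by rw [h2]; simp only [Matrix.mul_assoc, Matrix.one_mul]
    rw [e, e]; noncomm_ring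
  have e2 : (dg V (fun i => if d i < 0 then -1 else 1) * (h * h - k * k)).trace
      = (diagonal (fun i => (((if d i < 0 then -1 else 1 : ℝ)) : ℂ)) * (h' * Λ + Λ * k')).trace := by
    rw [← e1, dg, Matrix.mul_assoc, Matrix.mul_assoc, trace_mul_comm]
    simp only [Matrix.mul_assoc]
  rw [e2, h3, dg_hsq h1, trace, Complex.re_sum]
  refine Finset.sum_le_sum fun i _ => ?_
  have a1 : 0 ≤ (h' i i).re := (Complex.le_def.1 (ph.diag_nonneg (i := i))).1
  have a2 : 0 ≤ (k' i i).re := (Complex.le_def.1 (pk.diag_nonneg (i := i))).1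
  have a3 : (h' i i).re - (k' i i).re = d i := by
    have := congrFun (congrFun hd i) i
    rw [Matrix.sub_apply, hΛ, diagonal_apply_eq] at this
    have := congrArg Complex.re this
    simpa using this
  rw [diag_apply, diagonal_mul, Matrix.add_apply, hΛ, mul_diagonal, diagonal_mul, Complex.re_ofReal_mul,
    Complex.add_re, Complex.re_ofReal_mul, Complex.re_mul_ofReal]
  split_ifs with hn
  · nlinarith
  · nlinarith
end

section
open scoped ComplexOrder
variable {ι : Type*} [Fintype ι] [DecidableEq ι]

theorem mrank_add_le (A B : Matrix ι ι ℂ) : (A + B).rank ≤ A.rank + B.rank := by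
  have h : LinearMap.range (A + B).mulVecLin ≤ LinearMap.range A.mulVecLin ⊔ LinearMap.range B.mulVecLin := by
    rintro _ ⟨x, rfl⟩
    rw [Matrix.mulVecLin_add, LinearMap.add_apply]
    exact Submodule.add_mem_sup ⟨x, rfl⟩ ⟨x, rfl⟩
  exact (Submodule.finrank_mono h).trans (Submodule.finrank_add_le_finrank_add_finrank _ _)

theorem mazur_step {v h U : Matrix ι ι ℂ} (hv : vᴴ = v) (hvv : v * v = 1) (hh : h.PosSemidef)
    (hU1 : Uᴴ * U = 1) (hU2 : U * Uᴴ = 1) (δ : ℝ)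
    (hδ : ∀ Y : Matrix ι ι ℂ, Yᴴ * Y = 1 → Y * Yᴴ = 1 →
      ‖(Y * (U * (v * (h * h)) - (v * (h * h)) * U)).trace‖ ≤ δ) :
    hsq (U * h - h * U) ≤ √(2 * δ * hsq h) + δ := by
  have hhH : hᴴ = h := hh.isHermitian
  obtain ⟨k, hk⟩ : ∃ k, k = U * h * Uᴴ := ⟨_, rfl⟩
  obtain ⟨w, hw⟩ : ∃ w, w = U * v * Uᴴ := ⟨_, rfl⟩
  have hkp : k.PosSemidef := hk ▸ hh.mul_mul_conjTranspose_same U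
  have hwH : wᴴ = w := by
    rw [hw]; simp only [conjTranspose_mul, conjTranspose_conjTranspose, hv, Matrix.mul_assoc]
  have conjm : ∀ a b : Matrix ι ι ℂ, (U * a * Uᴴ) * (U * b * Uᴴ) = U * (a * b) * Uᴴ := by
    intro a b
    calc _ = U * a * (Uᴴ * U) * b * Uᴴ := by simp only [Matrix.mul_assoc]
      _ = _ := by rw [hU1]; simp only [Matrix.mul_assoc, Matrix.one_mul]
  have hww : w * w = 1 := by rw [hw, conjm, hvv, Matrix.mul_one, hU2]
  have hB : w * (k * k) = U * (v * (h * h)) * Uᴴ := by rw [hw, hk, conjm, conjm]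
  have hkk : (k * k).trace = (h * h).trace := by
    rw [hk, conjm, trace_mul_comm, ← Matrix.mul_assoc, hU1, Matrix.one_mul]
  have hτ : hsq h = (h * h).trace.re := by rw [hsq_eq_re, hhH]
  -- the commutator bound in conjugated form
  have hδ' : ∀ Y : Matrix ι ι ℂ, Yᴴ * Y = 1 → Y * Yᴴ = 1 →
      ‖(Y * (w * (k * k) - v * (h * h))).trace‖ ≤ δ := by
    intro Y y1 y2
    have := hδ (Uᴴ * Y)
      (by rw [conjTranspose_mul, conjTranspose_conjTranspose, Matrix.mul_assoc, ← Matrix.mul_assoc U, hU2,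
            Matrix.one_mul, y1])
      (by rw [conjTranspose_mul, conjTranspose_conjTranspose, Matrix.mul_assoc, ← Matrix.mul_assoc Y, y2,
            Matrix.one_mul, hU1])
    have e : Y * (w * (k * k) - v * (h * h)) = Y * (U * (v * (h * h)) - (v * (h * h)) * U) * Uᴴ := by
      rw [hB, Matrix.mul_assoc Y]
      congr 1
      rw [Matrix.sub_mul, Matrix.mul_assoc _ U, hU2, Matrix.mul_one]
    rw [e, trace_mul_comm, ← Matrix.mul_assoc]
    exact this
  have s1 : hsq h - δ ≤ (w * (v * (h * h))).trace.re := by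
    have := hδ' w (by rw [hwH, hww]) (by rw [hwH, hww])
    rw [Matrix.mul_sub, ← Matrix.mul_assoc w w, hww, Matrix.one_mul, trace_sub, hkk] at this
    have := (Complex.re_le_norm _).trans this
    rw [Complex.sub_re, ← hτ] at this
    linarith
  have s2 : hsq ((w - v) * h) ≤ 2 * δ := by
    have e : ((w - v) * h)ᴴ * ((w - v) * h) = h * h + h * h - h * (w * (v * h)) - (h * (w * (v * h)))ᴴ := by
      simp only [conjTranspose_mul, conjTranspose_sub, hv, hwH, hhH]
      have : h * (w - v) * ((w - v) * h) = h * (w * w) * h + h * (v * v) * h - h * (w * (v * h))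
        - h * v * w * h := by noncomm_ring
      rw [this, hww, hvv]; simp only [Matrix.mul_one, Matrix.mul_assoc]
    have e2 : (h * (w * (v * h))).trace = (w * (v * (h * h))).trace := by
      rw [trace_mul_comm]; simp only [Matrix.mul_assoc]
    rw [hsq_eq_re, e, trace_sub, trace_sub, trace_add, trace_conjTranspose, e2]
    simp only [Complex.sub_re, Complex.add_re, ← hτ]
    rw [show (star (w * (v * (h * h))).trace).re = (w * (v * (h * h))).trace.re from Complex.conj_re _]
    linarith
  obtain ⟨Y, y1, y2, hY⟩ := powers_stormer hh hkp
  have e3 : Y * (h * h - k * k) = (Y * w * ((w - v) * h)) * h - (Y * w) * (w * (k * k) - v * (h * h)) := by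
    have : (Y * w * ((w - v) * h)) * h - (Y * w) * (w * (k * k) - v * (h * h))
      = Y * (w * w) * (h * h) - Y * (w * w) * (k * k) := by noncomm_ring
    rw [this, hww]; noncomm_ring
  have yw1 : (Y * w)ᴴ * (Y * w) = 1 := by
    rw [conjTranspose_mul, Matrix.mul_assoc, ← Matrix.mul_assoc Yᴴ, y1, Matrix.one_mul, hwH, hww]
  have yw2 : (Y * w) * (Y * w)ᴴ = 1 := by
    rw [conjTranspose_mul, Matrix.mul_assoc, ← Matrix.mul_assoc w, hwH, hww, Matrix.one_mul, y2]
  have s3 := hδ' (Y * w) yw1 yw2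
  have s4 : ‖((Y * w * ((w - v) * h)) * h).trace‖ ≤ √(2 * δ * hsq h) := by
    refine Real.le_sqrt_of_sq_le ((hsq_cs _ _).trans ?_)
    rw [hsq_unit_mul yw1]
    exact mul_le_mul_of_nonneg_right s2 (hsq_nonneg h)
  have s5 : hsq (U * h - h * U) = hsq (h - k) := by
    have : h - k = -((U * h - h * U) * Uᴴ) := by
      rw [Matrix.sub_mul, Matrix.mul_assoc h, hU2, hk]; simp
    rw [this]
    rw [show hsq (-((U * h - h * U) * Uᴴ)) = hsq ((U * h - h * U) * Uᴴ) by simp [hsq]]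
    exact (hsq_mul_unit (by rw [conjTranspose_conjTranspose, hU1]) _).symm
  rw [s5]
  refine hY.trans ?_
  rw [e3, trace_sub, Complex.sub_re]
  have a1 := (Complex.re_le_norm _).trans s4
  have a2 := (Complex.abs_re_le_norm _).trans s3
  have := (abs_le.1 a2).1
  linarith
end

section
open scoped ComplexOrder
variable {N : ℕ} [NeZero N]

theorem small_trace_herm {H : Matrix (ZMod N) (ZMod N) ℂ} (hH : H.IsHermitian) (hr : 2 * H.rank ≤ N) (δ : ℝ)
    (hδ : ∀ U : Matrix (ZMod N) (ZMod N) ℂ, U = mZ ∨ U = mD ∨ U = mF →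
      ∀ Y : Matrix (ZMod N) (ZMod N) ℂ, Yᴴ * Y = 1 → Y * Yᴴ = 1 → ‖(Y * (U * H - H * U)).trace‖ ≤ δ) :
    ‖H.trace‖ ≤ 10 ^ 12 * δ := by
  obtain ⟨v, h, hv, hvv, hh, rfl, htr, hHt⟩ := polar_herm hH
  have hδ0 : 0 ≤ δ := (norm_nonneg _).trans (hδ mZ (Or.inl rfl) 1 (by simp) (by simp))
  have g := gap h
  have uZ := mZ_unit (N := N)
  have uD := mD_unit (N := N)
  have uF := mF_unit (N := N)
  have m1 := mazur_step hv hvv hh (mem_unitaryGroup_iff'.1 uZ) (mem_unitaryGroup_iff.1 uZ) δ (hδ _ (by simp))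
  have m2 := mazur_step hv hvv hh (mem_unitaryGroup_iff'.1 uD) (mem_unitaryGroup_iff.1 uD) δ (hδ _ (by simp))
  have m3 := mazur_step hv hvv hh (mem_unitaryGroup_iff'.1 uF) (mem_unitaryGroup_iff.1 uF) δ (hδ _ (by simp))
  have hτ := hsq_nonneg h
  set τ := hsq h
  set s := √(2 * δ * τ) with hs
  have hs2 : s ^ 2 = 2 * δ * τ := Real.sq_sqrt (by positivity)
  have hs0 : 0 ≤ s := Real.sqrt_nonneg _
  have hN : (0 : ℝ) < N := by exact_mod_cast Nat.pos_of_ne_zero (NeZero.ne N)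
  have hr' : ((v * (h * h)).rank : ℝ) * τ ≤ N / 2 * τ := by
    have : (2 : ℝ) * ((v * (h * h)).rank : ℝ) ≤ N := by exact_mod_cast hr
    refine mul_le_mul_of_nonneg_right ?_ hτ
    linarith
  have k1 : N * (τ / 2) ≤ N * (100000 * (3 * (s + δ))) := by
    have : (N : ℝ) * (hsq (mZ * h - h * mZ) + hsq (mD * h - h * mD) + hsq (mF * h - h * mF)) ≤ N * (3 * (s + δ)) := by
      refine mul_le_mul_of_nonneg_left ?_ hN.le
      linarith
    linarith
  have k2 := le_of_mul_le_mul_left k1 hN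
  have k3 : 600000 * s ≤ τ / 2 + 600000 ^ 2 * δ := by
    refine abs_le_of_sq_le_sq' ?_ (by positivity) |>.2
    nlinarith [sq_nonneg (τ / 2 - 600000 ^ 2 * δ)]
  refine hHt.trans ?_
  linarith

theorem small_trace {S : Matrix (ZMod N) (ZMod N) ℂ} (hr : 4 * S.rank ≤ N) (δ : ℝ)
    (hδ : ∀ U : Matrix (ZMod N) (ZMod N) ℂ, U = mZ ∨ U = mD ∨ U = mF →
      ∀ Y : Matrix (ZMod N) (ZMod N) ℂ, Yᴴ * Y = 1 → Y * Yᴴ = 1 → ‖(Y * (U * S - S * U)).trace‖ ≤ δ) :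
    ‖S.trace‖ ≤ 2 * 10 ^ 12 * δ := by
  have hU : ∀ U : Matrix (ZMod N) (ZMod N) ℂ, U = mZ ∨ U = mD ∨ U = mF → Uᴴ * U = 1 ∧ U * Uᴴ = 1 := by
    rintro U (rfl | rfl | rfl)
    · exact ⟨mem_unitaryGroup_iff'.1 mZ_unit, mem_unitaryGroup_iff.1 mZ_unit⟩
    · exact ⟨mem_unitaryGroup_iff'.1 mD_unit, mem_unitaryGroup_iff.1 mD_unit⟩
    · exact ⟨mem_unitaryGroup_iff'.1 mF_unit, mem_unitaryGroup_iff.1 mF_unit⟩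
  have hδs : ∀ U : Matrix (ZMod N) (ZMod N) ℂ, U = mZ ∨ U = mD ∨ U = mF →
      ∀ Y : Matrix (ZMod N) (ZMod N) ℂ, Yᴴ * Y = 1 → Y * Yᴴ = 1 → ‖(Y * (U * Sᴴ - Sᴴ * U)).trace‖ ≤ δ := by
    intro U hu Y y1 y2
    obtain ⟨u1, u2⟩ := hU U hu
    have := hδ U hu (Uᴴ * Yᴴ * Uᴴ)
      (by simp only [conjTranspose_mul, conjTranspose_conjTranspose, Matrix.mul_assoc]
          rw [← Matrix.mul_assoc U Uᴴ, u2, Matrix.one_mul, ← Matrix.mul_assoc Y, y2, Matrix.one_mul, u2])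
      (by simp only [conjTranspose_mul, conjTranspose_conjTranspose, Matrix.mul_assoc]
          rw [← Matrix.mul_assoc Uᴴ U, u1, Matrix.one_mul, ← Matrix.mul_assoc Yᴴ, y1, Matrix.one_mul, u1])
    have e : (Y * (U * Sᴴ - Sᴴ * U)).trace = star ((Uᴴ * Yᴴ * Uᴴ * (U * S - S * U)).trace) := by
      rw [← trace_conjTranspose]
      simp only [conjTranspose_mul, conjTranspose_sub, conjTranspose_conjTranspose]
      rw [trace_mul_comm Y]
      have : (Sᴴ * Uᴴ - Uᴴ * Sᴴ) * (U * (Y * U)) = Sᴴ * (Uᴴ * U) * (Y * U) - Uᴴ * (Sᴴ * U * Y) * U := by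
        noncomm_ring
      rw [this, u1, trace_sub, trace_mul_comm _ U, ← Matrix.mul_assoc U, u2, Matrix.one_mul, Matrix.sub_mul, trace_sub,
        Matrix.mul_one, ← Matrix.mul_assoc Sᴴ, trace_mul_comm _ U, ← Matrix.mul_assoc]
    rw [e, norm_star]; exact this
  have rk1 : ∀ c d : ℂ, 2 * (c • S + d • Sᴴ).rank ≤ N := by
    intro c d
    have a := mrank_add_le (c • S) (d • Sᴴ)
    have b : (c • S).rank ≤ S.rank := by
      have : c • S = (c • (1 : Matrix (ZMod N) (ZMod N) ℂ)) * S := by simp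
      rw [this]; exact rank_mul_le_right _ _
    have b' : (d • Sᴴ).rank ≤ S.rank := by
      have : d • Sᴴ = (d • (1 : Matrix (ZMod N) (ZMod N) ℂ)) * Sᴴ := by simp
      rw [this]; exact (rank_mul_le_right _ _).trans (le_of_eq (rank_conjTranspose S))
    omega
  have bd : ∀ c d : ℂ, ‖c‖ ≤ 1 / 2 → ‖d‖ ≤ 1 / 2 → (c • S + d • Sᴴ).IsHermitian →
      ‖(c • S + d • Sᴴ).trace‖ ≤ 10 ^ 12 * δ := by
    intro c d hc hd hH
    refine small_trace_herm hH (rk1 c d) δ ?_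
    intro U hu Y y1 y2
    have e : Y * (U * (c • S + d • Sᴴ) - (c • S + d • Sᴴ) * U)
        = c • (Y * (U * S - S * U)) + d • (Y * (U * Sᴴ - Sᴴ * U)) := by
      simp only [Matrix.mul_add, Matrix.add_mul, Matrix.mul_sub, Matrix.mul_smul, Matrix.smul_mul, smul_sub]
      abel
    rw [e, trace_add, trace_smul, trace_smul]
    refine (norm_add_le _ _).trans ?_
    rw [norm_smul, norm_smul]
    have h1 := hδ U hu Y y1 y2
    have h2 := hδs U hu Y y1 y2
    have g1 := mul_le_mul hc h1 (norm_nonneg _) (by norm_num)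
    have g2 := mul_le_mul hd h2 (norm_nonneg _) (by norm_num)
    linarith
  have b1 := bd (1 / 2) (1 / 2) (by norm_num) (by norm_num) (by
    unfold IsHermitian
    rw [conjTranspose_add, conjTranspose_smul, conjTranspose_smul, conjTranspose_conjTranspose, add_comm]
    simp)
  have b2 := bd (-(Complex.I / 2)) (Complex.I / 2) (by simp) (by simp) (by
    unfold IsHermitian
    rw [conjTranspose_add, conjTranspose_smul, conjTranspose_smul, conjTranspose_conjTranspose, add_comm]
    simp [neg_div])
  have e : S.trace = ((1 / 2 : ℂ) • S + (1 / 2 : ℂ) • Sᴴ).trace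
      + Complex.I * ((-(Complex.I / 2)) • S + (Complex.I / 2) • Sᴴ).trace := by
    simp only [trace_add, trace_smul, smul_eq_mul]
    linear_combination (-(1 / 2) * S.trace + 1 / 2 * Sᴴ.trace) * (-1 : ℂ) * Complex.I_mul_I
  rw [e]
  refine (norm_add_le _ _).trans ?_
  rw [norm_mul, Complex.norm_I, one_mul]
  linarith
end

end

section
open Matrix
theorem small_trace_fin (k : ℕ) : ∃ U : Fin 3 → Matrix (Fin (k + 1)) (Fin (k + 1)) ℂ,
    (∀ j, U j ∈ unitaryGroup (Fin (k + 1)) ℂ) ∧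
    ∀ S : Matrix (Fin (k + 1)) (Fin (k + 1)) ℂ, 4 * S.rank ≤ k + 1 → ∀ δ : ℝ,
      (∀ j, ∀ Y : Matrix (Fin (k + 1)) (Fin (k + 1)) ℂ, Yᴴ * Y = 1 → Y * Yᴴ = 1 →
        ‖(Y * (U j * S - S * U j)).trace‖ ≤ δ) → ‖S.trace‖ ≤ 2 * 10 ^ 12 * δ := by
  have key : ∃ U : Fin 3 → Matrix (ZMod (k + 1)) (ZMod (k + 1)) ℂ,
      (∀ j, U j ∈ unitaryGroup (ZMod (k + 1)) ℂ) ∧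
      ∀ S : Matrix (ZMod (k + 1)) (ZMod (k + 1)) ℂ, 4 * S.rank ≤ k + 1 → ∀ δ : ℝ,
      (∀ j, ∀ Y : Matrix (ZMod (k + 1)) (ZMod (k + 1)) ℂ, Yᴴ * Y = 1 → Y * Yᴴ = 1 →
        ‖(Y * (U j * S - S * U j)).trace‖ ≤ δ) → ‖S.trace‖ ≤ 2 * 10 ^ 12 * δ := by
    refine ⟨![mZ, mD, mF], ?_, ?_⟩
    · intro j
      fin_cases j
      · exact mZ_unit
      · exact mD_unit
      · exact mF_unit
    · intro S hS δ hδ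
      refine small_trace hS δ ?_
      rintro U (rfl | rfl | rfl)
      · exact hδ 0
      · exact hδ 1
      · exact hδ 2
  exact key

/-- The `k`-th coordinate of an element of `lpMn` as a matrix. -/
def evalM (k : ℕ) : lpMn →ₗ[ℂ] Matrix (Fin (k + 1)) (Fin (k + 1)) ℂ where
  toFun a := (toEuclideanCLM (𝕜 := ℂ) (n := Fin (k + 1))).symm (a k)
  map_add' a b := by simp
  map_smul' c a := by simp

theorem evalM_mul (k : ℕ) (a b : lpMn) : evalM k (a * b) = evalM k a * evalM k b := by
  simp [evalM, lp.infty_coeFn_mul]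

theorem evalM_one (k : ℕ) : evalM k 1 = 1 := by
  simp [evalM, lp.infty_coeFn_one]

theorem entry_le {k : ℕ} (M : Matrix (Fin (k + 1)) (Fin (k + 1)) ℂ) (r : Fin (k + 1)) :
    ‖M r r‖ ≤ ‖toEuclideanCLM (𝕜 := ℂ) M‖ := by
  have h1 : (toEuclideanCLM (𝕜 := ℂ) M (EuclideanSpace.single r 1)) r = M r r := by
    simp
  rw [← h1]
  refine (PiLp.norm_apply_le _ r).trans ((ContinuousLinearMap.le_opNorm _ _).trans ?_)
  simp

theorem unit_norm {k : ℕ} {Y : Matrix (Fin (k + 1)) (Fin (k + 1)) ℂ} (h : Y ∈ unitaryGroup (Fin (k + 1)) ℂ) :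
    ‖toEuclideanCLM (𝕜 := ℂ) Y‖ ≤ 1 := by
  have : toEuclideanCLM (𝕜 := ℂ) Y ∈
      unitary (EuclideanSpace ℂ (Fin (k + 1)) →L[ℂ] EuclideanSpace ℂ (Fin (k + 1))) :=
    Unitary.map_mem (toEuclideanCLM (𝕜 := ℂ) (n := Fin (k + 1))) h
  exact (CStarRing.norm_of_mem_unitary this).le

/-- `a ⊗ b ↦ a(k) e_r e_r* b(k)`. -/
def slice (k : ℕ) (r : Fin (k + 1)) : lpMn ⊗[ℂ] lpMn →ₗ[ℂ] Matrix (Fin (k + 1)) (Fin (k + 1)) ℂ :=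
  TensorProduct.lift (LinearMap.mk₂ ℂ (fun a b => evalM k a * single r r 1 * evalM k b)
    (fun a a' b => by simp [Matrix.add_mul]) (fun c a b => by simp)
    (fun a b b' => by simp [Matrix.mul_add]) (fun c a b => by simp))

theorem slice_tmul (k : ℕ) (r : Fin (k + 1)) (a b : lpMn) :
    slice k r (a ⊗ₜ b) = evalM k a * single r r 1 * evalM k b := rfl

theorem slice_actL (k : ℕ) (r : Fin (k + 1)) (u : lpMn) (T : lpMn ⊗[ℂ] lpMn) :
    slice k r (actL u T) = evalM k u * slice k r T := by
  induction T with
  | zero => simp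
  | add x y hx hy => rw [map_add, map_add, hx, hy, map_add, Matrix.mul_add]
  | tmul a b =>
    simp only [actL, TensorProduct.map_tmul, slice_tmul, LinearMap.mulLeft_apply, LinearMap.id_apply,
      evalM_mul, Matrix.mul_assoc]

theorem slice_actR (k : ℕ) (r : Fin (k + 1)) (u : lpMn) (T : lpMn ⊗[ℂ] lpMn) :
    slice k r (actR u T) = slice k r T * evalM k u := by
  induction T with
  | zero => simp
  | add x y hx hy => rw [map_add, map_add, hx, hy, map_add, Matrix.add_mul]
  | tmul a b =>
    simp only [actR, TensorProduct.map_tmul, slice_tmul, LinearMap.mulRight_apply, LinearMap.id_apply,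
      evalM_mul, Matrix.mul_assoc]

theorem slice_sum (k : ℕ) (T : lpMn ⊗[ℂ] lpMn) :
    ∑ r, slice k r T = evalM k (LinearMap.mul' ℂ lpMn T) := by
  induction T with
  | zero => simp
  | add x y hx hy => simp only [map_add, Finset.sum_add_distrib, hx, hy]
  | tmul a b =>
    simp only [slice_tmul, LinearMap.mul'_apply, evalM_mul]
    rw [← Finset.sum_mul, ← Finset.mul_sum, Matrix.sum_single_one, Matrix.mul_one]

theorem slice_bound (k : ℕ) (r : Fin (k + 1)) (a b : lpMn) {Y : Matrix (Fin (k + 1)) (Fin (k + 1)) ℂ}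
    (hY : Y ∈ unitaryGroup (Fin (k + 1)) ℂ) : ‖(Y * slice k r (a ⊗ₜ b)).trace‖ ≤ ‖a‖ * ‖b‖ := by
  have e : (Y * slice k r (a ⊗ₜ b)).trace = (evalM k b * Y * evalM k a) r r := by
    rw [slice_tmul, trace_mul_comm, Matrix.mul_assoc, Matrix.mul_assoc, trace_mul_comm, Matrix.mul_assoc]
    rw [Matrix.trace_single_mul]
    simp
  rw [e]
  refine (entry_le _ r).trans ?_
  rw [map_mul, map_mul]
  have ea : ‖toEuclideanCLM (𝕜 := ℂ) (evalM k a)‖ ≤ ‖a‖ := by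
    simp only [evalM, LinearMap.coe_mk, AddHom.coe_mk, StarAlgEquiv.apply_symm_apply]
    exact lp.norm_apply_le_norm (by simp) a k
  have eb : ‖toEuclideanCLM (𝕜 := ℂ) (evalM k b)‖ ≤ ‖b‖ := by
    simp only [evalM, LinearMap.coe_mk, AddHom.coe_mk, StarAlgEquiv.apply_symm_apply]
    exact lp.norm_apply_le_norm (by simp) b k
  have ey := unit_norm hY
  refine (norm_mul_le _ _).trans ?_
  rw [mul_comm]
  refine mul_le_mul ea ?_ (norm_nonneg _) (norm_nonneg _)
  refine (norm_mul_le _ _).trans ?_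
  calc _ ≤ ‖b‖ * 1 := mul_le_mul eb ey (norm_nonneg _) (norm_nonneg _)
    _ = _ := mul_one _

theorem slice_proj (k : ℕ) (r : Fin (k + 1)) (W : lpMn ⊗[ℂ] lpMn) {ε : ℝ} (hW : projSeminorm W < ε)
    {Y : Matrix (Fin (k + 1)) (Fin (k + 1)) ℂ}
    (hY : Y ∈ unitaryGroup (Fin (k + 1)) ℂ) : ‖(Y * slice k r W).trace‖ ≤ ε := by
  have hne : {s : ℝ | ∃ (n : ℕ) (x : Fin n → lpMn) (y : Fin n → lpMn),
      W = ∑ j, x j ⊗ₜ[ℂ] y j ∧ s = ∑ j, ‖x j‖ * ‖y j‖}.Nonempty := by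
    obtain ⟨S, hS⟩ := TensorProduct.exists_finset W
    refine ⟨_, S.card, fun j => (S.equivFin.symm j).1.1, fun j => (S.equivFin.symm j).1.2, ?_, rfl⟩
    rw [hS, ← Finset.sum_coe_sort S (fun i => i.1 ⊗ₜ[ℂ] i.2)]
    exact (Equiv.sum_comp S.equivFin.symm (fun i : S => i.1.1 ⊗ₜ[ℂ] i.1.2)).symm
  obtain ⟨s, ⟨n, x, y, hxy, rfl⟩, hs⟩ := exists_lt_of_csInf_lt hne hW
  refine le_trans ?_ hs.le
  rw [hxy, map_sum, Matrix.mul_sum, trace_sum]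
  exact (norm_sum_le _ _).trans (Finset.sum_le_sum fun j _ => slice_bound k r _ _ hY)

theorem slice_rank (T : lpMn ⊗[ℂ] lpMn) : ∃ m : ℕ, ∀ (k : ℕ) (r : Fin (k + 1)), (slice k r T).rank ≤ m := by
  induction T with
  | zero => exact ⟨0, fun k r => by simp⟩
  | add x y hx hy =>
    obtain ⟨m, hm⟩ := hx
    obtain ⟨n, hn⟩ := hy
    refine ⟨m + n, fun k r => ?_⟩
    rw [map_add]
    exact (mrank_add_le _ _).trans (add_le_add (hm k r) (hn k r))
  | tmul a b =>
    refine ⟨1, fun k r => ?_⟩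
    rw [slice_tmul]
    refine (rank_mul_le_left _ _).trans ((rank_mul_le_right _ _).trans ?_)
    rw [single_eq_single_vecMulVec_single]
    exact rank_vecMulVec_le _ _

/-- The unitaries used, as matrices. -/
def unitM (j : Fin 3) (k : ℕ) : Matrix (Fin (k + 1)) (Fin (k + 1)) ℂ := (small_trace_fin k).choose j

theorem unitM_mem (j : Fin 3) (k : ℕ) : unitM j k ∈ unitaryGroup (Fin (k + 1)) ℂ :=
  (small_trace_fin k).choose_spec.1 j

/-- The unitaries used, as elements of `lpMn`. -/
def unitL (j : Fin 3) : lpMn :=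
  ⟨fun k => toEuclideanCLM (𝕜 := ℂ) (unitM j k), memℓp_infty ⟨1, by
    rintro _ ⟨k, rfl⟩
    exact unit_norm (unitM_mem j k)⟩⟩

theorem unitL_mem (j : Fin 3) : unitL j ∈ unitary lpMn := by
  have h : ∀ k, toEuclideanCLM (𝕜 := ℂ) (unitM j k) ∈
      unitary (EuclideanSpace ℂ (Fin (k + 1)) →L[ℂ] EuclideanSpace ℂ (Fin (k + 1))) := fun k =>
    Unitary.map_mem (toEuclideanCLM (𝕜 := ℂ) (n := Fin (k + 1))) (unitM_mem j k)
  rw [Unitary.mem_iff]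
  constructor
  · ext1; funext k
    exact (Unitary.mem_iff.1 (h k)).1
  · ext1; funext k
    exact (Unitary.mem_iff.1 (h k)).2

theorem evalM_unitL (j : Fin 3) (k : ℕ) : evalM k (unitL j) = unitM j k :=
  (toEuclideanCLM (𝕜 := ℂ) (n := Fin (k + 1))).symm_apply_apply (unitM j k)

theorem main_aux (T : lpMn ⊗[ℂ] lpMn) (hT : LinearMap.mul' ℂ lpMn T = 1)
    (h : ∀ j, projSeminorm (actL (unitL j) T - actR (unitL j) T) < 1 / (4 * 10 ^ 12)) : False := by
  obtain ⟨m, hm⟩ := slice_rank T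
  have b : ∀ r, ‖(slice (4 * m) r T).trace‖ ≤ 1 / 2 := by
    intro r
    refine ((small_trace_fin (4 * m)).choose_spec.2 (slice (4 * m) r T)
      (by have := hm (4 * m) r; omega) (1 / (4 * 10 ^ 12)) ?_).trans (by norm_num)
    intro j Y y1 y2
    have := slice_proj (4 * m) r _ (h j) (Y := Y) (mem_unitaryGroup_iff.2 y2)
    rw [map_sub, slice_actL, slice_actR, evalM_unitL] at this
    exact this
  have e := congrArg trace (slice_sum (4 * m) T)
  rw [hT, evalM_one, trace_one, trace_sum, Fintype.card_fin] at e
  have n1 := norm_sum_le Finset.univ (fun r => (slice (4 * m) r T).trace)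
  rw [e, Complex.norm_natCast] at n1
  have n2 := n1.trans (Finset.sum_le_sum fun r _ => b r)
  simp only [Finset.sum_const, Finset.card_univ, Fintype.card_fin, nsmul_eq_mul] at n2
  push_cast at n2
  have : (0 : ℝ) ≤ m := by positivity
  linarith
end

/-- `ℓ∞(𝕄_n) = ℓ∞-⊕_{n=1}^∞ M_n(ℂ)` admits no approximately invariant normalized
diagonal: there exist `ε > 0` and finitely many unitaries `u₁,…,u_t` such that no
element `T` of the algebraic tensor product `M ⊗ M` whose image under the
multiplication map is `1` satisfies `‖uⱼ·T − T·uⱼ‖_π < ε` for all `j`.  Consequently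
`ℓ∞(𝕄_n)` is not approximately amenable, answering negatively the question of
Ghahramani–Loy. -/
theorem lpMn_no_approx_invariant_diagonal :
    ∃ ε > (0 : ℝ), ∃ (t : ℕ) (u : Fin t → lpMn),
      (∀ j, u j ∈ unitary lpMn) ∧
      ∀ T : lpMn ⊗[ℂ] lpMn, LinearMap.mul' ℂ lpMn T = 1 →
        ¬ (∀ j, projSeminorm (actL (u j) T - actR (u j) T) < ε) := by
  refine ⟨1 / (4 * 10 ^ 12), by norm_num, 3, unitL, unitL_mem, ?_⟩
  intro T hT h
  exact main_aux T hT h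

end
end
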